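/- Let G=(V,E) be a planar graph with terminal set T ⊆ V such that every pair of terminals in T is k-element-connected in G. Then G contains at least ⌈k/5⌉ − 1 pairwise element-disjoint Steiner trees spanning T; moreover, these trees can be chosen so that in each tree every non-terminal vertex has degree exactly 2. -/

import Mathlib

open SimpleGraph

/-- Two walks between the same pair of vertices are *element-disjoint* with respect to a
terminal set `T` if they share no edges and every common vertex is a terminal or an
endpoint. -/
def ElemDisjWalks {V : Type*} (T : Set V) {G : SimpleGraph V} {u v : V}
    (W₁ W₂ : G.Walk u v) : Prop :=
  (∀ e, e ∈ W₁.edges → e ∉ W₂.edges) ∧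
  (∀ x, x ∈ W₁.support → x ∈ W₂.support → x ∈ T ∪ {u, v})

/-- There exist `k` pairwise element-disjoint `u`-`v` paths in `G`
(with respect to the terminal set `T`). -/
def HasElemPaths {V : Type*} (G : SimpleGraph V) (T : Set V) (u v : V) (k : ℕ) : Prop :=
  ∃ P : Fin k → G.Walk u v, (∀ i, (P i).IsPath) ∧
    ∀ i j, i ≠ j → ElemDisjWalks T (P i) (P j)

/-- The element-connectivity `κ'_G(u,v)`: the maximum number of `u`-`v` paths that are
pairwise disjoint in edges and in non-terminal vertices. -/
noncomputable def elemConn {V : Type*} (G : SimpleGraph V) (T : Set V) (u v : V) : ℕ :=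
  sSup {k | HasElemPaths G T u v k}

/-- Two subgraphs, given as graphs on the same vertex set, are *element-disjoint* with
respect to the terminal set `T`: they share no edges and no non-terminal vertices. -/
def EDisj {V : Type*} (T : Set V) (H₁ H₂ : SimpleGraph V) : Prop :=
  Disjoint H₁.edgeSet H₂.edgeSet ∧ ∀ x, x ∈ H₁.support → x ∈ H₂.support → x ∈ T

/-- `H` is a Steiner tree of `G` for the terminal set `T`: a tree subgraph of `G`
containing all the terminals. -/
def IsSteinerTree {V : Type*} (G : SimpleGraph V) (T : Set V) (H : SimpleGraph V) : Prop :=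
  H ≤ G ∧ H.IsAcyclic ∧
    ∀ x ∈ H.support ∪ T, ∀ y ∈ H.support ∪ T, H.Reachable x y

/-- `H` is a Steiner forest of `G` for the terminal groups `T i`: a forest subgraph of
`G` in which each group lies entirely within a single tree of the forest. -/
def IsSteinerForest {V : Type*} {m : ℕ} (G : SimpleGraph V) (T : Fin m → Set V)
    (H : SimpleGraph V) : Prop :=
  H ≤ G ∧ H.IsAcyclic ∧ ∀ i, ∀ u ∈ T i, ∀ v ∈ T i, H.Reachable u v

/-- `G` has `H` as a minor: there are nonempty, pairwise-disjoint, connected branch sets,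
one for each vertex of `H`, with an edge of `G` between the branch sets of any two
adjacent vertices of `H`. -/
def HasMinor {V : Type*} {W : Type*} (G : SimpleGraph V) (H : SimpleGraph W) : Prop :=
  ∃ f : W → Set V,
    (∀ w, (f w).Nonempty) ∧
    (∀ w, (G.induce (f w)).Connected) ∧
    (∀ w₁ w₂, w₁ ≠ w₂ → Disjoint (f w₁) (f w₂)) ∧
    (∀ w₁ w₂, H.Adj w₁ w₂ → ∃ a ∈ f w₁, ∃ b ∈ f w₂, G.Adj a b)

/-- Planarity, via Wagner's theorem: a graph is planar iff it has neither a `K₅` minor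
nor a `K₃,₃` minor. -/
def IsPlanar {V : Type*} (G : SimpleGraph V) : Prop :=
  ¬ HasMinor G (completeGraph (Fin 5)) ∧
  ¬ HasMinor G (completeBipartiteGraph (Fin 3) (Fin 3))

universe u

/-! ### Connected sets and minors -/

/-- one-step relation inside a set -/
def StepIn {V : Type*} (G : SimpleGraph V) (S : Set V) (x y : V) : Prop :=
  G.Adj x y ∧ x ∈ S ∧ y ∈ S

/-- `S` is connected (or empty) in `G` -/
def CS {V : Type*} (G : SimpleGraph V) (S : Set V) : Prop :=
  ∀ a ∈ S, ∀ b ∈ S, Relation.ReflTransGen (StepIn G S) a b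

theorem StepIn.symm' {V : Type*} {G : SimpleGraph V} {S : Set V} {x y : V}
    (h : StepIn G S x y) : StepIn G S y x := ⟨h.1.symm, h.2.2, h.2.1⟩

theorem rtg_symm {V : Type*} {G : SimpleGraph V} {S : Set V} {x y : V}
    (h : Relation.ReflTransGen (StepIn G S) x y) : Relation.ReflTransGen (StepIn G S) y x := by
  induction h with
  | refl => exact .refl
  | tail _ h2 ih => exact .head h2.symm' ih

theorem rtg_mono {V : Type*} {G : SimpleGraph V} {S S' : Set V} (hS : S ⊆ S') {x y : V}
    (h : Relation.ReflTransGen (StepIn G S) x y) : Relation.ReflTransGen (StepIn G S') x y :=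
  Relation.ReflTransGen.mono (fun _ _ h => ⟨h.1, hS h.2.1, hS h.2.2⟩) _ _ h

theorem cs_of_root {V : Type*} {G : SimpleGraph V} {S : Set V} (r : V)
    (h : ∀ z ∈ S, Relation.ReflTransGen (StepIn G S) r z) : CS G S :=
  fun a ha b hb => (rtg_symm (h a ha)).trans (h b hb)

theorem preconn_of_cs {V : Type*} {G : SimpleGraph V} {S : Set V} (h : CS G S) :
    (G.induce S).Preconnected := by
  rintro ⟨a, ha⟩ ⟨b, hb⟩
  have h1 := h a ha b hb
  have : ∀ c, Relation.ReflTransGen (StepIn G S) a c → ∀ hc : c ∈ S,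
      (G.induce S).Reachable ⟨a, ha⟩ ⟨c, hc⟩ := by
    intro c hc
    induction hc with
    | refl => intro _; exact Reachable.refl _
    | tail _ h2 ih =>
      intro hc
      refine (ih h2.2.1).trans (Adj.reachable ?_)
      exact h2.1
  exact this b h1 hb

theorem cs_of_preconn {V : Type*} {G : SimpleGraph V} {S : Set V}
    (h : (G.induce S).Preconnected) : CS G S := by
  intro a ha b hb
  have h1 := h ⟨a, ha⟩ ⟨b, hb⟩
  rw [SimpleGraph.reachable_iff_reflTransGen] at h1
  have := Relation.ReflTransGen.lift (p := StepIn G S) Subtype.val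
    (fun x y hxy => ⟨hxy, x.2, y.2⟩) _ _ h1
  exact this

theorem hasMinor_mk {V W : Type*} {G : SimpleGraph V} {H : SimpleGraph W} (f : W → Set V)
    (h1 : ∀ w, (f w).Nonempty) (h2 : ∀ w, CS G (f w))
    (h3 : ∀ w₁ w₂, w₁ ≠ w₂ → Disjoint (f w₁) (f w₂))
    (h4 : ∀ w₁ w₂, H.Adj w₁ w₂ → ∃ a ∈ f w₁, ∃ b ∈ f w₂, G.Adj a b) : HasMinor G H := by
  refine ⟨f, h1, fun w => ?_, h3, h4⟩
  have : Nonempty (f w) := (h1 w).to_subtype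
  exact ⟨preconn_of_cs (h2 w)⟩

theorem hasMinor_trans {V W U : Type*} {G : SimpleGraph V} {H : SimpleGraph W}
    {K : SimpleGraph U} (hGH : HasMinor G H) (hHK : HasMinor H K) : HasMinor G K := by
  obtain ⟨f, f1, f2, f3, f4⟩ := hGH
  obtain ⟨g, g1, g2, g3, g4⟩ := hHK
  refine hasMinor_mk (fun u => ⋃ w ∈ g u, f w) ?_ ?_ ?_ ?_
  · intro u
    obtain ⟨w, hw⟩ := g1 u
    obtain ⟨a, ha⟩ := f1 w
    exact ⟨a, by simp only [Set.mem_iUnion]; exact ⟨w, hw, ha⟩⟩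
  · intro u a ha b hb
    simp only [Set.mem_iUnion] at ha hb
    obtain ⟨w, hw, ha⟩ := ha
    obtain ⟨w', hw', hb⟩ := hb
    have hg := cs_of_preconn (g2 u).preconnected w hw w' hw'
    have sub : ∀ x ∈ g u, f x ⊆ ⋃ w ∈ g u, f w := fun x hx => Set.subset_biUnion_of_mem hx
    clear hw'
    induction hg generalizing b with
    | refl => exact rtg_mono (sub w hw) (cs_of_preconn (f2 w).preconnected a ha b hb)
    | tail h1 h2 ih =>
      rename_i y z
      obtain ⟨p, hp, q, hq, hpq⟩ := f4 _ _ h2.1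
      refine (ih p hp).trans (.head ⟨hpq, sub y h2.2.1 hp, sub z h2.2.2 hq⟩ ?_)
      exact rtg_mono (sub z h2.2.2) (cs_of_preconn (f2 z).preconnected q hq b hb)
  · intro u u' huu
    rw [Set.disjoint_left]
    intro a ha hb
    simp only [Set.mem_iUnion] at ha hb
    obtain ⟨w, hw, ha⟩ := ha
    obtain ⟨w', hw', hb⟩ := hb
    by_cases h : w = w'
    · subst h
      exact Set.disjoint_left.1 (g3 _ _ huu) hw hw'
    · exact Set.disjoint_left.1 (f3 _ _ h) ha hb
  · intro u u' huu
    obtain ⟨w, hw, w', hw', h⟩ := g4 _ _ huu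
    obtain ⟨a, ha, b, hb, hab⟩ := f4 _ _ h
    refine ⟨a, ?_, b, ?_, hab⟩ <;> simp only [Set.mem_iUnion]
    exacts [⟨w, hw, ha⟩, ⟨w', hw', hb⟩]

theorem hasMinor_induce {V : Type*} (G : SimpleGraph V) (S : Set V) :
    HasMinor G (G.induce S) := by
  refine hasMinor_mk (fun w => {w.1}) (fun w => ⟨w.1, rfl⟩) ?_ ?_ ?_
  · rintro w a ha b hb
    rw [Set.mem_singleton_iff] at ha hb
    subst ha; subst hb; exact .refl
  · intro w w' h
    rw [Set.disjoint_singleton]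
    exact fun h' => h (Subtype.ext h')
  · intro w w' h
    exact ⟨_, rfl, _, rfl, h⟩

/-- image graph under a vertex map -/
def contr {V W : Type*} (G : SimpleGraph V) (φ : V → W) : SimpleGraph W where
  Adj a b := a ≠ b ∧ ∃ u v, φ u = a ∧ φ v = b ∧ G.Adj u v
  symm := ⟨by
    rintro a b ⟨h, u, v, h1, h2, h3⟩
    exact ⟨h.symm, v, u, h2, h1, h3.symm⟩⟩
  loopless := ⟨fun _ h => h.1 rfl⟩

open Classical in
/-- the map contracting `y` into `x` -/
noncomputable def cmap {V : Type*} (x y : V) (hxy : x ≠ y) (v : V) : {v : V // v ≠ y} :=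
  if h : v = y then ⟨x, hxy⟩ else ⟨v, h⟩

theorem cmap_y {V : Type*} (x y : V) (hxy : x ≠ y) : cmap x y hxy y = ⟨x, hxy⟩ := by
  simp [cmap]

theorem cmap_ne {V : Type*} (x y : V) (hxy : x ≠ y) (v : V) (h : v ≠ y) :
    cmap x y hxy v = ⟨v, h⟩ := by
  simp [cmap, h]

theorem cmap_val {V : Type*} (x y : V) (hxy : x ≠ y) (v : {v : V // v ≠ y}) :
    cmap x y hxy v.1 = v := cmap_ne x y hxy v.1 v.2

theorem hasMinor_contr {V : Type*} (G : SimpleGraph V) (x y : V) (hxy : G.Adj x y) :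
    HasMinor G (contr G (cmap x y hxy.ne)) := by
  refine hasMinor_mk (fun w => {v | cmap x y hxy.ne v = w}) ?_ ?_ ?_ ?_
  · exact fun w => ⟨w.1, cmap_val _ _ _ _⟩
  · intro w
    refine cs_of_root w.1 ?_
    intro z hz
    have hw : cmap x y hxy.ne w.1 = w := cmap_val _ _ _ _
    by_cases h : z = y
    · subst h
      have hz' : cmap x z hxy.ne z = w := hz
      rw [cmap_y] at hz'
      have hwx : w.1 = x := by rw [← hz']
      rw [hwx]
      rw [hwx] at hw
      exact .single ⟨hxy, hw, hz⟩
    · have hz' : cmap x y hxy.ne z = w := hz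
      rw [cmap_ne _ _ _ _ h] at hz'
      rw [← hz']
  · intro w w' h
    rw [Set.disjoint_left]
    intro a ha hb
    exact h (ha.symm.trans hb)
  · rintro w w' ⟨h, u, v, h1, h2, h3⟩
    exact ⟨u, h1, v, h2, h3⟩

/-! ### A `K₄` minor from minimum degree three -/

theorem deg_induce {V : Type*} (H : SimpleGraph V) (S : Set V) (v : V) (hv : v ∈ S)
    (h : H.neighborSet v ⊆ S) :
    ((H.induce S).neighborSet ⟨v, hv⟩).ncard = (H.neighborSet v).ncard := by
  have : (Subtype.val '' ((H.induce S).neighborSet ⟨v, hv⟩)) = H.neighborSet v := by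
    ext w
    constructor
    · rintro ⟨w, hw, rfl⟩; exact hw
    · intro hw; exact ⟨⟨w, h hw⟩, hw, rfl⟩
  rw [← this, Set.ncard_image_of_injective _ Subtype.val_injective]

theorem cmap_injOn {V : Type*} (x y : V) (hxy : x ≠ y) (S : Set V) (h : ¬ (x ∈ S ∧ y ∈ S)) :
    Set.InjOn (cmap x y hxy) S := by
  intro a ha b hb hab
  by_cases h1 : a = y <;> by_cases h2 : b = y
  · rw [h1, h2]
  · rw [h1, cmap_y, cmap_ne _ _ _ _ h2, Subtype.mk.injEq] at hab
    subst hab; subst h1; exact absurd ⟨hb, ha⟩ h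
  · rw [h2, cmap_y, cmap_ne _ _ _ _ h1, Subtype.mk.injEq] at hab
    subst hab; subst h2; exact absurd ⟨ha, hb⟩ h
  · rw [cmap_ne _ _ _ _ h2, cmap_ne _ _ _ _ h1, Subtype.mk.injEq] at hab
    exact hab

theorem deg_contr_aux {V : Type*} [Fintype V] (H : SimpleGraph V) (x y : V) (hxy : x ≠ y)
    (z : V) (hzx : z ≠ x) (hzy : z ≠ y) (S : Set V) (hS : S ⊆ H.neighborSet z)
    (h : ¬ (x ∈ S ∧ y ∈ S)) :
    S.ncard ≤ ((contr H (cmap x y hxy)).neighborSet ⟨z, hzy⟩).ncard := by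
  rw [← (cmap_injOn x y hxy _ h).ncard_image]
  refine Set.ncard_le_ncard ?_ (Set.toFinite _)
  rintro _ ⟨w, hw, rfl⟩
  refine ⟨?_, z, w, cmap_ne _ _ _ _ hzy, rfl, hS hw⟩
  have hzw : z ≠ w := (hS hw : H.Adj z w).ne
  by_cases hwy : w = y
  · subst hwy; rw [cmap_y]; intro h; exact hzx (Subtype.mk.inj h)
  · rw [cmap_ne _ _ _ _ hwy]; intro h; exact hzw (Subtype.mk.inj h)

theorem deg_contr {V : Type*} [Fintype V] (H : SimpleGraph V) (x y : V) (hxy : x ≠ y)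
    (z : V) (hzx : z ≠ x) (hzy : z ≠ y) (h : ¬ (H.Adj z x ∧ H.Adj z y)) :
    (H.neighborSet z).ncard ≤ ((contr H (cmap x y hxy)).neighborSet ⟨z, hzy⟩).ncard :=
  deg_contr_aux H x y hxy z hzx hzy _ subset_rfl h

theorem deg_contr' {V : Type*} [Fintype V] (H : SimpleGraph V) (x y : V) (hxy : x ≠ y)
    (z : V) (hzx : z ≠ x) (hzy : z ≠ y) :
    (H.neighborSet z).ncard ≤ ((contr H (cmap x y hxy)).neighborSet ⟨z, hzy⟩).ncard + 1 := by
  have h1 := deg_contr_aux H x y hxy z hzx hzy (H.neighborSet z \ {y}) Set.sdiff_subset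
    (fun h => h.2.2 rfl)
  have h2 := Set.ncard_le_ncard_sdiff_add_ncard (H.neighborSet z) {y}
  rw [Set.ncard_singleton] at h2
  omega

theorem ncard_three {V : Type*} [Fintype V] (S : Set V) (hS : S.ncard = 3) (a b : V) (ha : a ∈ S)
    (hb : b ∈ S) (hab : a ≠ b) : ∃ c, c ≠ a ∧ c ≠ b ∧ ∀ x, x ∈ S ↔ x = a ∨ x = b ∨ x = c := by
  obtain ⟨p, q, r, h1, h2, h3, rfl⟩ := Set.ncard_eq_three.1 hS
  simp only [Set.mem_insert_iff, Set.mem_singleton_iff] at ha hb ⊢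
  rcases ha with rfl | rfl | rfl <;> rcases hb with rfl | rfl | rfl
  · exact absurd rfl hab
  · exact ⟨r, by tauto, by tauto, by tauto⟩
  · exact ⟨q, by tauto, by tauto, by tauto⟩
  · exact ⟨r, by tauto, by tauto, by tauto⟩
  · exact absurd rfl hab
  · exact ⟨p, by tauto, by tauto, by tauto⟩
  · exact ⟨q, by tauto, by tauto, by tauto⟩
  · exact ⟨p, by tauto, by tauto, by tauto⟩
  · exact absurd rfl hab

theorem k4_of_sets {V : Type*} (H : SimpleGraph V) (a b c : V) (U : Set V) (hU : CS H U)
    (hab : H.Adj a b) (hac : H.Adj a c) (hbc : H.Adj b c) (ha : a ∉ U) (hb : b ∉ U) (hc : c ∉ U)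
    (ha' : ∃ w ∈ U, H.Adj a w) (hb' : ∃ w ∈ U, H.Adj b w) (hc' : ∃ w ∈ U, H.Adj c w) :
    HasMinor H (completeGraph (Fin 4)) := by
  have one : ∀ a : V, CS H {a} := by
    rintro a x rfl y rfl; exact .refl
  have e : ∀ (f : Fin 4 → Set V), (∀ i j : Fin 4, i < j → Disjoint (f i) (f j)) →
      ∀ i j, i ≠ j → Disjoint (f i) (f j) := by
    intro f h i j hij
    rcases lt_or_gt_of_ne hij with h' | h'
    exacts [h _ _ h', (h _ _ h').symm]
  have e' : ∀ (f : Fin 4 → Set V), (∀ i j : Fin 4, i < j → ∃ a ∈ f i, ∃ b ∈ f j, H.Adj a b) →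
      ∀ i j, i ≠ j → ∃ a ∈ f i, ∃ b ∈ f j, H.Adj a b := by
    intro f h i j hij
    rcases lt_or_gt_of_ne hij with h' | h'
    · exact h _ _ h'
    · obtain ⟨a, ha, b, hb, hab⟩ := h _ _ h'
      exact ⟨b, hb, a, ha, hab.symm⟩
  refine hasMinor_mk ![{a}, {b}, {c}, U] ?_ ?_ ?_ ?_
  · intro i
    obtain ⟨w, hw, _⟩ := ha'
    fin_cases i
    exacts [⟨a, rfl⟩, ⟨b, rfl⟩, ⟨c, rfl⟩, ⟨w, hw⟩]
  · intro i
    fin_cases i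
    exacts [one a, one b, one c, hU]
  · apply e
    intro i j
    fin_cases i <;> fin_cases j <;> simp [hab.ne, hac.ne, hbc.ne, ha, hb, hc]
  · apply e'
    intro i j
    fin_cases i <;> fin_cases j <;> simp [hab, hac, hbc, ha', hb', hc']

theorem k4_minor : ∀ (n : ℕ) (V : Type u) [Fintype V] (H : SimpleGraph V) (r : V),
    Fintype.card V = n → 2 ≤ n → (∀ v, v ≠ r → 3 ≤ (H.neighborSet v).ncard) →
    HasMinor H (completeGraph (Fin 4)) := by
  intro n
  induction n using Nat.strong_induction_on with
  | _ n IH =>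
  intro V _ H r hn h2 hdeg
  classical
  have hcard : ∀ x : V, Fintype.card {v : V // v ≠ x} = n - 1 := by
    intro x
    rw [Fintype.card_subtype_compl, hn]
    simp
  have h4 : 4 ≤ n := by
    have : Nontrivial V := Fintype.one_lt_card_iff_nontrivial.1 (by omega)
    obtain ⟨v, hv⟩ := exists_ne r
    have h1 := hdeg v hv
    have h3 : (insert v (H.neighborSet v)).ncard = (H.neighborSet v).ncard + 1 :=
      Set.ncard_insert_of_notMem (by simp) (Set.toFinite _)
    have h5 : (insert v (H.neighborSet v)).ncard ≤ Nat.card V := Set.ncard_le_card _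
    rw [Nat.card_eq_fintype_card, hn] at h5
    omega
  by_cases hr : ∃ y, H.Adj r y
  swap
  · push Not at hr
    have : Nontrivial V := Fintype.one_lt_card_iff_nontrivial.1 (by omega)
    obtain ⟨v, hv⟩ := exists_ne r
    refine hasMinor_trans (hasMinor_induce H {v | v ≠ r}) ?_
    refine IH (n - 1) (by omega) {v : V // v ≠ r} _ ⟨v, hv⟩ (hcard r) (by omega) ?_
    rintro ⟨w, hw⟩ _
    rw [deg_induce]
    · exact hdeg w hw
    · rintro x hx rfl
      exact hr w (H.adj_symm hx)
  have stepA : HasMinor H (completeGraph (Fin 4)) ∨ ∀ y, H.Adj r y →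
      ∃ z, H.Adj z r ∧ H.Adj z y ∧ (H.neighborSet z).ncard = 3 := by
    by_contra hcon
    push Not at hcon
    obtain ⟨hno, y, hry, hz⟩ := hcon
    apply hno
    refine hasMinor_trans (hasMinor_contr H r y hry) ?_
    refine IH (n - 1) (by omega) {v : V // v ≠ y} _ ⟨r, hry.ne⟩ (hcard y) (by omega) ?_
    rintro ⟨w, hw⟩ hwr
    have hwr' : w ≠ r := fun h => hwr (Subtype.ext h)
    by_cases hb : H.Adj w r ∧ H.Adj w y
    · have h1 := hz w hb.1 hb.2
      have h3 := hdeg w hwr'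
      have h5 := deg_contr' H r y hry.ne w hwr' hw
      omega
    · exact (hdeg w hwr').trans (deg_contr H r y hry.ne w hwr' hw hb)
  rcases stepA with h | stepA
  · exact h
  obtain ⟨y, hry⟩ := hr
  obtain ⟨z, hzr, -, hz3⟩ := stepA y hry
  obtain ⟨z', hzr', hzz, hz3'⟩ := stepA z hzr.symm
  obtain ⟨u, hur, huz', hu⟩ := ncard_three _ hz3 r z' hzr hzz.symm hzr'.ne.symm
  obtain ⟨v, hvr, hvz, hv⟩ := ncard_three _ hz3' r z hzr' hzz hzr.ne.symm
  simp only [mem_neighborSet] at hu hv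
  have hzu : H.Adj z u := (hu u).2 (by simp)
  have hzv : H.Adj z' v := (hv v).2 (by simp)
  by_cases huv : u = v
  swap
  · refine hasMinor_trans (hasMinor_contr H z z' hzz.symm) ?_
    refine IH (n - 1) (by omega) {v : V // v ≠ z'} _ ⟨r, hzr'.ne.symm⟩ (hcard z') (by omega) ?_
    rintro ⟨w, hw⟩ hwr
    have hwr' : w ≠ r := fun h => hwr (Subtype.ext h)
    by_cases hwz : w = z
    · subst hwz
      have h3 : ({⟨r, hzr'.ne.symm⟩, ⟨u, huz'⟩, ⟨v, hzv.ne.symm⟩} : Set {v : V // v ≠ z'}) ⊆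
          (contr H (cmap w z' hzz.symm.ne)).neighborSet ⟨w, hw⟩ := by
        rintro x (rfl | rfl | rfl)
        · exact ⟨by simp [hzr.ne], w, r, cmap_ne _ _ _ _ hw, cmap_ne _ _ _ _ _, hzr⟩
        · exact ⟨by simp [hzu.ne], w, u, cmap_ne _ _ _ _ hw, cmap_ne _ _ _ _ _, hzu⟩
        · exact ⟨by simp [hvz.symm], z', v, cmap_y _ _ _, cmap_ne _ _ _ _ _, hzv⟩
      refine le_trans ?_ (Set.ncard_le_ncard h3 (Set.toFinite _))
      rw [Set.ncard_eq_three.2 ⟨_, _, _, ?_, ?_, ?_, rfl⟩]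
      · simp [hur.symm]
      · simp [hvr.symm]
      · simp [huv]
    · refine (hdeg w hwr').trans (deg_contr H z z' _ w hwz hw ?_)
      rintro ⟨h1, h3⟩
      have h5 := (hu w).1 h1.symm
      have h6 := (hv w).1 h3.symm
      rcases h5 with h5 | h5 | h5
      · exact hwr' h5
      · exact hw h5
      · rcases h6 with h6 | h6 | h6
        · exact hwr' h6
        · exact hwz h6
        · exact huv (h5.symm.trans h6)
  subst huv
  set X : Set V := {x | x ≠ z ∧ x ≠ z' ∧ x ≠ r} with hX
  set U : Set V := {w | Relation.ReflTransGen (StepIn H X) u w} with hUdef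
  have huX : u ∈ X := ⟨hvz, huz', hur⟩
  have hUX : U ⊆ X := by
    intro w hw
    rcases Relation.ReflTransGen.cases_tail hw with h | ⟨c, _, h⟩
    · rw [h]; exact huX
    · exact h.2.2
  have hUcl : ∀ a ∈ U, ∀ b ∈ X, H.Adj a b → b ∈ U := by
    intro a ha b hb hab
    exact Relation.ReflTransGen.tail ha ⟨hab, hUX ha, hb⟩
  have huU : u ∈ U := Relation.ReflTransGen.refl
  have hUc : CS H U := by
    refine cs_of_root u ?_
    intro w hw
    have hw' : Relation.ReflTransGen (StepIn H X) u w := hw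
    clear hw
    induction hw' with
    | refl => exact .refl
    | tail h1 h3 ih => exact ih.tail ⟨h3.1, h1, h1.tail h3⟩
  by_cases hrU : ∃ w ∈ U, H.Adj r w
  · exact k4_of_sets H z z' r U hUc hzz.symm hzr hzr' (fun h => (hUX h).1 rfl)
      (fun h => (hUX h).2.1 rfl) (fun h => (hUX h).2.2 rfl) ⟨u, huU, hzu⟩ ⟨u, huU, hzv⟩ hrU
  push Not at hrU
  refine hasMinor_trans (hasMinor_induce H U) ?_
  refine IH (Fintype.card U) ?_ U _ ⟨u, huU⟩ rfl ?_ ?_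
  · rw [← hn]
    exact Fintype.card_subtype_lt (x := z) (fun h => (hUX h).1 rfl)
  · have h1 := hdeg u hur
    have h3 : ∃ w, H.Adj u w ∧ w ≠ z ∧ w ≠ z' := by
      by_contra hcon
      push Not at hcon
      have : H.neighborSet u ⊆ {z, z'} := by
        intro w hw
        by_cases hwz : w = z
        · simp [hwz]
        · simp [hcon w hw hwz]
      have h5 := Set.ncard_le_ncard this (Set.toFinite _)
      have h6 := Set.ncard_insert_le z {z'}
      rw [Set.ncard_singleton] at h6
      omega
    obtain ⟨w, hw, hwz, hwz'⟩ := h3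
    have hwU : w ∈ U := hUcl u huU w ⟨hwz, hwz', by rintro rfl; exact hrU u huU hw.symm⟩ hw
    have : Nontrivial U := ⟨⟨u, huU⟩, ⟨w, hwU⟩, fun h => hw.ne (Subtype.mk.inj h)⟩
    exact Fintype.one_lt_card
  · rintro ⟨w, hw⟩ hwu
    have hwu' : w ≠ u := fun h => hwu (Subtype.ext h)
    rw [deg_induce]
    · exact hdeg w (hUX hw).2.2
    · intro x hx
      refine hUcl w hw x ⟨?_, ?_, ?_⟩ hx
      · rintro rfl
        rcases (hu w).1 (H.adj_symm hx) with h | h | h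
        exacts [(hUX hw).2.2 h, (hUX hw).2.1 h, hwu' h]
      · rintro rfl
        rcases (hv w).1 (H.adj_symm hx) with h | h | h
        exacts [(hUX hw).2.2 h, (hUX hw).1 h, hwu' h]
      · rintro rfl
        exact hrU w hw (H.adj_symm hx)

theorem k5_of_nbhd {V : Type*} (G : SimpleGraph V) (x : V)
    (h : HasMinor (G.induce (G.neighborSet x)) (completeGraph (Fin 4))) :
    HasMinor G (completeGraph (Fin 5)) := by
  obtain ⟨f, f1, f2, f3, f4⟩ := h
  have key : ∀ w : Fin 4, CS G (Subtype.val '' f w) := by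
    rintro w _ ⟨a, ha, rfl⟩ _ ⟨b, hb, rfl⟩
    have := cs_of_preconn (f2 w).preconnected a ha b hb
    exact Relation.ReflTransGen.lift (p := StepIn G (Subtype.val '' f w)) Subtype.val
      (fun p q hpq => ⟨hpq.1, ⟨p, hpq.2.1, rfl⟩, ⟨q, hpq.2.2, rfl⟩⟩) _ _ this
  have hx : ∀ w : Fin 4, ∀ a ∈ Subtype.val '' f w, G.Adj x a := by
    rintro w _ ⟨a, ha, rfl⟩
    exact a.2
  refine hasMinor_mk (Fin.cons {x} (fun w => Subtype.val '' f w)) ?_ ?_ ?_ ?_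
  · intro w
    rcases Fin.eq_zero_or_eq_succ w with rfl | ⟨w, rfl⟩
    · exact ⟨x, rfl⟩
    · exact (f1 w).image _
  · intro w
    rcases Fin.eq_zero_or_eq_succ w with rfl | ⟨w, rfl⟩
    · intro a ha b hb
      have hab : a = b := Eq.trans (b := x) ha (Eq.symm hb)
      rw [hab]
    · exact key w
  · intro w w'
    rcases Fin.eq_zero_or_eq_succ w with rfl | ⟨w, rfl⟩ <;>
      rcases Fin.eq_zero_or_eq_succ w' with rfl | ⟨w', rfl⟩
    · intro h; exact absurd rfl h
    · intro _
      simp only [Fin.cons_zero, Fin.cons_succ, Set.disjoint_singleton_left]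
      intro h; exact (hx _ _ h).ne rfl
    · intro _
      simp only [Fin.cons_zero, Fin.cons_succ, Set.disjoint_singleton_right]
      intro h; exact (hx _ _ h).ne rfl
    · intro h
      simp only [Fin.cons_succ]
      rw [Set.disjoint_image_iff Subtype.val_injective]
      exact f3 _ _ (fun h' => h (by rw [h']))
  · intro w w'
    rcases Fin.eq_zero_or_eq_succ w with rfl | ⟨w, rfl⟩ <;>
      rcases Fin.eq_zero_or_eq_succ w' with rfl | ⟨w', rfl⟩
    · intro h; exact absurd rfl h.ne
    · intro _
      obtain ⟨a, ha⟩ := f1 w'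
      exact ⟨x, rfl, a, ⟨a, ha, rfl⟩, a.2⟩
    · intro _
      obtain ⟨a, ha⟩ := f1 w
      exact ⟨a, ⟨a, ha, rfl⟩, x, rfl, a.2.symm⟩
    · intro h
      have h' : w ≠ w' := fun h' => h.ne (by rw [h'])
      obtain ⟨a, ha, b, hb, hab⟩ := f4 w w' h'
      exact ⟨a, ⟨a, ha, rfl⟩, b, ⟨b, hb, rfl⟩, hab⟩

/-! ### Mader's edge bound -/

theorem edges_contr {V : Type*} [Fintype V] (Q : SimpleGraph V) (x y : V) (hxy : Q.Adj x y) :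
    Q.edgeSet.ncard ≤ (contr Q (cmap x y hxy.ne)).edgeSet.ncard + 1 +
      {z | Q.Adj x z ∧ Q.Adj y z}.ncard := by
  classical
  set C := contr Q (cmap x y hxy.ne) with hC
  set K : Set V := {z | Q.Adj x z ∧ Q.Adj y z} with hK
  set E0 : Set (Sym2 V) := {e | e ∈ Q.edgeSet ∧ y ∉ e} with hE0
  set N' : Set V := Q.neighborSet y \ insert x K with hN'
  have h1 : Q.edgeSet ⊆ E0 ∪ (fun b => s(y, b)) '' Q.neighborSet y := by
    intro e he
    by_cases hy : y ∈ e
    · obtain ⟨b, rfl⟩ := Sym2.mem_iff_exists.1 hy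
      exact Or.inr ⟨b, he, rfl⟩
    · exact Or.inl ⟨he, hy⟩
  have h2 : Q.edgeSet.ncard ≤ E0.ncard + (Q.neighborSet y).ncard :=
    (Set.ncard_le_ncard h1 (Set.toFinite _)).trans ((Set.ncard_union_le _ _).trans
      (Nat.add_le_add_left (Set.ncard_image_le (Set.toFinite _)) _))
  have h3 : (Q.neighborSet y).ncard ≤ N'.ncard + (K.ncard + 1) :=
    (Set.ncard_le_ncard_sdiff_add_ncard _ (insert x K)).trans
      (Nat.add_le_add_left (Set.ncard_insert_le _ _) _)
  have h4 : E0 ∪ (fun b => s(x, b)) '' N' ⊆ Sym2.map Subtype.val '' C.edgeSet := by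
    rintro e (⟨he, hy⟩ | ⟨b, ⟨hb1, hb2⟩, rfl⟩)
    · induction e using Sym2.ind with
      | _ a b =>
      simp only [Sym2.mem_iff, not_or] at hy
      have ha : a ≠ y := fun h => hy.1 h.symm
      have hb : b ≠ y := fun h => hy.2 h.symm
      refine ⟨s(⟨a, ha⟩, ⟨b, hb⟩), ?_, rfl⟩
      refine ⟨?_, a, b, cmap_ne _ _ _ _ ha, cmap_ne _ _ _ _ hb, he⟩
      intro h; exact (Q.ne_of_adj he) (Subtype.mk.inj h)
    · have hb1' : Q.Adj y b := hb1
      have hby : b ≠ y := hb1'.ne.symm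
      refine ⟨s(⟨x, hxy.ne⟩, ⟨b, hby⟩), ?_, rfl⟩
      refine ⟨?_, y, b, cmap_y _ _ _, cmap_ne _ _ _ _ hby, hb1⟩
      intro h; exact hb2 (Or.inl (Subtype.mk.inj h).symm)
  have h5 : Disjoint E0 ((fun b => s(x, b)) '' N') := by
    rw [Set.disjoint_left]
    rintro _ ⟨he, _⟩ ⟨b, ⟨hb1, hb2⟩, rfl⟩
    exact hb2 (Or.inr ⟨he, hb1⟩)
  have h6 : ((fun b => s(x, b)) '' N').ncard = N'.ncard := by
    refine Set.ncard_image_of_injective _ ?_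
    intro a b hab
    have hab' : a = b ∨ x = b ∧ a = x := by simpa using hab
    exact hab'.elim id (fun h => h.2.trans h.1)
  have h7 := Set.ncard_le_ncard h4 (Set.toFinite _)
  rw [Set.ncard_union_eq h5, h6, Set.ncard_image_of_injective _
    (Sym2.map.injective Subtype.val_injective)] at h7
  omega

theorem mader_k5 : ∀ (n : ℕ) (V : Type u) [Fintype V] (Q : SimpleGraph V),
    Fintype.card V = n → ¬ HasMinor Q (completeGraph (Fin 5)) → Q.edgeSet.ncard ≤ 3 * n := by
  intro n
  induction n with
  | zero =>
    intro V _ Q hn _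
    have : IsEmpty V := Fintype.card_eq_zero_iff.1 hn
    rw [show Q.edgeSet = ∅ from ?_]
    · simp
    · ext e
      induction e using Sym2.ind with
      | _ a b => exact isEmptyElim a
  | succ n IH =>
    intro V _ Q hn hK
    classical
    by_contra hlt
    push Not at hlt
    have hcom : ∀ x y, Q.Adj x y → 3 ≤ {z | Q.Adj x z ∧ Q.Adj y z}.ncard := by
      intro x y hxy
      have h1 := edges_contr Q x y hxy
      have h2 := IH {v : V // v ≠ y} (contr Q (cmap x y hxy.ne))
        (by rw [Fintype.card_subtype_compl, hn]; simp)
        (fun h => hK (hasMinor_trans (hasMinor_contr Q x y hxy) h))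
      omega
    obtain ⟨e, he⟩ : Q.edgeSet.Nonempty := by
      rw [← Set.ncard_pos (Set.toFinite _)]; omega
    induction e using Sym2.ind with
    | _ x y =>
    have hxy : Q.Adj x y := he
    apply hK
    apply k5_of_nbhd Q x
    have key : ∀ v : Q.neighborSet x,
        3 ≤ ((Q.induce (Q.neighborSet x)).neighborSet v).ncard := by
      rintro ⟨v, hv⟩
      refine (hcom x v hv).trans ?_
      rw [← Set.ncard_image_of_injective _ Subtype.val_injective]
      refine Set.ncard_le_ncard ?_ (Set.toFinite _)
      rintro z ⟨h1, h2⟩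
      exact ⟨⟨z, h1⟩, h2, rfl⟩
    refine k4_minor (Fintype.card (Q.neighborSet x)) (Q.neighborSet x) _ ⟨y, hxy⟩ rfl ?_
      (fun v _ => key v)
    have h1 := key ⟨y, hxy⟩
    have h2 := Set.ncard_le_card ((Q.induce (Q.neighborSet x)).neighborSet ⟨y, hxy⟩)
    rw [Nat.card_eq_fintype_card] at h2
    omega

/-! ### A linear matroid union argument -/

section MatroidUnion

variable {K E ι : Type*} [Field K] [AddCommGroup E] [Module K E]

theorem span_support {v : ι → E} {S : Set ι} (hS : LinearIndepOn K v S) (A : Set ι) {x : E}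
    (hx : x ∈ Submodule.span K (v '' S))
    (h : ∀ u ∈ S, u ∉ A → x ∈ Submodule.span K (v '' (S \ {u}))) :
    x ∈ Submodule.span K (v '' (S ∩ A)) := by
  rw [Finsupp.mem_span_image_iff_linearCombination] at hx ⊢
  obtain ⟨l, hl, hlx⟩ := hx
  refine ⟨l, ?_, hlx⟩
  rw [Finsupp.mem_supported]
  intro u hu
  have huS : u ∈ S := (Finsupp.mem_supported _ _).1 hl hu
  refine ⟨huS, ?_⟩
  by_contra huA
  have h1 := h u huS huA
  rw [Finsupp.mem_span_image_iff_linearCombination] at h1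
  obtain ⟨l', hl', hlx'⟩ := h1
  have hl'' : l' ∈ Finsupp.supported K K S :=
    Finsupp.supported_mono Set.sdiff_subset hl'
  have h2 : l - l' = 0 := by
    refine linearIndepOn_iff.1 hS _ (Submodule.sub_mem _ hl hl'') ?_
    rw [map_sub, hlx, hlx', sub_self]
  have h3 : l' u = 0 := by
    by_contra hne
    have : u ∈ S \ {u} := (Finsupp.mem_supported _ _).1 hl' (Finsupp.mem_support_iff.2 hne)
    exact this.2 rfl
  have h4 : l u = l' u := by rw [sub_eq_zero.1 h2]
  exact (Finsupp.mem_support_iff.1 hu) (h4.trans h3)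

variable (ι E) in
/-- partial colouring with chosen vectors -/
structure MState (ℓ : ℕ) where
  col : ι → Option (Fin ℓ)
  vec : ι → E

variable {ℓ : ℕ}

def MState.cls (s : MState E ι ℓ) (j : Fin ℓ) : Set ι := {i | s.col i = some j}

def MState.used (s : MState E ι ℓ) : Set ι := {i | s.col i ≠ none}

variable (K) in
def MState.Valid (D : ι → Set E) (s : MState E ι ℓ) : Prop :=
  (∀ i j, s.col i = some j → s.vec i ∈ D i) ∧ ∀ j, LinearIndepOn K s.vec (s.cls j)

variable (K) in
def MState.Max (D : ι → Set E) (s : MState E ι ℓ) : Prop :=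
  s.Valid K D ∧ ∀ s' : MState E ι ℓ, s'.Valid K D → s'.used.ncard ≤ s.used.ncard

open Classical in
variable (K) in
def MState.Step (D : ι → Set E) (s s' : MState E ι ℓ) : Prop :=
  ∃ w u j x, s.col w = none ∧ s.col u = some j ∧ x ∈ D w ∧
    x ∉ Submodule.span K (s.vec '' (s.cls j \ {u})) ∧
    s'.col = Function.update (Function.update s.col u none) w (some j) ∧
    s'.vec = Function.update s.vec w x

theorem update_image_eq [DecidableEq ι] (v : ι → E) (w : ι) (x : E) (S : Set ι) (hw : w ∉ S) :
    Function.update v w x '' S = v '' S := by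
  refine Set.image_congr ?_
  intro a ha
  exact Function.update_of_ne (show a ≠ w from fun h => hw (h ▸ ha)) _ _

theorem update_indep [DecidableEq ι] {v : ι → E} {w : ι} {x : E} {S : Set ι} (hw : w ∉ S)
    (hS : LinearIndepOn K v S) : LinearIndepOn K (Function.update v w x) S := by
  refine hS.congr ?_
  intro a ha
  exact (Function.update_of_ne (show a ≠ w from fun h => hw (h ▸ ha)) _ _).symm

theorem update_indep_insert [DecidableEq ι] {v : ι → E} {w : ι} {x : E} {S : Set ι} (hw : w ∉ S)
    (hS : LinearIndepOn K v S) (hx : x ∉ Submodule.span K (v '' S)) :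
    LinearIndepOn K (Function.update v w x) (insert w S) := by
  rw [linearIndepOn_insert hw]
  refine ⟨update_indep hw hS, ?_⟩
  rw [update_image_eq _ _ _ _ hw, Function.update_self]
  exact hx

variable [Finite ι] {D : ι → Set E}

theorem MState.exists_max : ∃ s : MState E ι ℓ, s.Max K D := by
  classical
  have h0 : ∃ n, ∃ s : MState E ι ℓ, s.Valid K D ∧ Nat.card ι - s.used.ncard = n := by
    refine ⟨_, ⟨fun _ => none, fun _ => 0⟩, ⟨fun i j h => by simp at h, fun j => ?_⟩, rfl⟩
    have : MState.cls (⟨fun _ => none, fun _ => 0⟩ : MState E ι ℓ) j = ∅ := by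
      ext i; simp [MState.cls]
    rw [this]
    exact linearIndepOn_empty _ _
  obtain ⟨s, hs, hn⟩ := Nat.find_spec h0
  refine ⟨s, hs, fun s' hs' => ?_⟩
  have h1 := Nat.find_min' h0 ⟨s', hs', rfl⟩
  have h2 : s'.used.ncard ≤ Nat.card ι := Set.ncard_le_card _
  have h3 : s.used.ncard ≤ Nat.card ι := Set.ncard_le_card _
  omega

theorem MState.Max.mem_span {s : MState E ι ℓ} (hs : s.Max K D) {w : ι} (hw : s.col w = none)
    {x : E} (hx : x ∈ D w) (j : Fin ℓ) : x ∈ Submodule.span K (s.vec '' s.cls j) := by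
  classical
  by_contra hcon
  let s' : MState E ι ℓ := ⟨Function.update s.col w (some j), Function.update s.vec w x⟩
  have hwj : ∀ j, w ∉ s.cls j := fun j h => by simp [MState.cls, hw] at h
  have hv : s'.Valid K D := by
    constructor
    · intro i j' hij
      by_cases hi : i = w
      · subst hi; simpa [s'] using hx
      · have : s.col i = some j' := by simpa [s', hi] using hij
        simpa [s', hi] using hs.1.1 i j' this
    · intro j'
      by_cases hj : j' = j
      · subst hj
        have : s'.cls j' = insert w (s.cls j') := by
          ext i
          by_cases hi : i = w
          · subst hi; simp [MState.cls, s']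
          · simp [MState.cls, s', hi]
        rw [this]
        exact update_indep_insert (hwj _) (hs.1.2 j') hcon
      · have : s'.cls j' = s.cls j' := by
          ext i
          by_cases hi : i = w
          · subst hi; simp [MState.cls, s', hw, Ne.symm hj]
          · simp [MState.cls, s', hi]
        rw [this]
        exact update_indep (hwj _) (hs.1.2 j')
  have h1 := hs.2 s' hv
  have h2 : s'.used = insert w s.used := by
    ext i
    by_cases hi : i = w
    · subst hi; simp [MState.used, s']
    · simp [MState.used, s', hi]
  rw [h2, Set.ncard_insert_of_notMem (by simp [MState.used, hw]) (Set.toFinite _)] at h1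
  omega

theorem MState.step_cls {s s' : MState E ι ℓ} {w u : ι} {j : Fin ℓ} (hw : s.col w = none)
    (hu : s.col u = some j) [DecidableEq ι]
    (hc : s'.col = Function.update (Function.update s.col u none) w (some j)) (j' : Fin ℓ) :
    s'.cls j' = if j' = j then insert w (s.cls j \ {u}) else s.cls j' := by
  have hwu : w ≠ u := by rintro rfl; rw [hw] at hu; cases hu
  ext i
  split_ifs with h
  · subst h
    by_cases hi : i = w
    · subst hi; simp [MState.cls, hc]
    · by_cases hi' : i = u
      · subst hi'; simp [MState.cls, hc, hi]
      · simp [MState.cls, hc, hi, hi']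
  · by_cases hi : i = w
    · subst hi; simp [MState.cls, hc, hw, Ne.symm h]
    · by_cases hi' : i = u
      · subst hi'; simp [MState.cls, hc, hi, hu, Ne.symm h]
      · simp [MState.cls, hc, hi, hi']

theorem MState.Max.step {s s' : MState E ι ℓ} (hs : s.Max K D) (h : s.Step K D s') :
    s'.Max K D := by
  classical
  obtain ⟨w, u, j, x, hw, hu, hx, hxs, hc, hv⟩ := h
  have hwu : w ≠ u := by rintro rfl; rw [hw] at hu; cases hu
  have hwj : ∀ j, w ∉ s.cls j := fun j h => by simp [MState.cls, hw] at h
  have hc' : s'.col = Function.update (Function.update s.col u none) w (some j) := by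
    rw [hc]; 
  have hv' : s'.vec = Function.update s.vec w x := by rw [hv]
  have hcls := MState.step_cls hw hu hc'
  refine ⟨⟨?_, ?_⟩, ?_⟩
  · intro i j' hij
    by_cases hi : i = w
    · subst hi; rw [hv']; simpa using hx
    · by_cases hi' : i = u
      · subst hi'; simp [hc', hi] at hij
      · rw [hv', Function.update_of_ne hi]
        refine hs.1.1 i j' ?_
        simpa [hc', hi, hi'] using hij
  · intro j'
    rw [hcls, hv']
    split_ifs with h
    · exact update_indep_insert (fun h => hwj _ h.1) ((hs.1.2 j).mono Set.sdiff_subset) hxs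
    · exact update_indep (hwj _) (hs.1.2 j')
  · have h2 : s'.used = insert w (s.used \ {u}) := by
      ext i
      by_cases hi : i = w
      · subst hi; simp [MState.used, hc']
      · by_cases hi' : i = u
        · subst hi'; simp [MState.used, hc', hi]
        · simp [MState.used, hc', hi, hi']
    have h3 : s'.used.ncard = s.used.ncard := by
      rw [h2, Set.ncard_insert_of_notMem (by simp [MState.used, hw]) (Set.toFinite _)]
      exact Set.ncard_sdiff_singleton_add_one (by simp [MState.used, hu]) (Set.toFinite _)
    rw [h3]
    exact hs.2

variable (K D ℓ) in
theorem matroid_union : ∃ s : MState E ι ℓ, s.Valid K D ∧ ∃ A : Set ι,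
    (∀ i, i ∉ A → s.col i ≠ none) ∧
    ∀ j, ∀ w ∈ A, D w ⊆ Submodule.span K (s.vec '' (s.cls j ∩ A)) := by
  classical
  obtain ⟨s, hs⟩ := MState.exists_max (K := K) (D := D) (ℓ := ℓ)
  let R := Relation.ReflTransGen (MState.Step K D (ℓ := ℓ)) s
  have hmax : ∀ t, R t → t.Max K D := by
    intro t ht
    induction ht with
    | refl => exact hs
    | tail _ h ih => exact ih.step h
  let A : Set ι := {w | ∃ t, R t ∧ t.col w = none}
  have key : ∀ t, R t → ∀ w, t.col w = none → ∀ x ∈ D w, ∀ j,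
      x ∈ Submodule.span K (t.vec '' (t.cls j ∩ A)) := by
    intro t ht w hw x hx j
    refine span_support ((hmax t ht).1.2 j) A ((hmax t ht).mem_span hw hx j) ?_
    intro u hu huA
    by_contra hxs
    have hwu : u ≠ w := by rintro rfl; rw [show t.col u = some j from hu] at hw; cases hw
    apply huA
    refine ⟨⟨Function.update (Function.update t.col u none) w (some j),
      Function.update t.vec w x⟩, ht.tail ⟨w, u, j, x, hw, hu, hx, hxs, ?_, ?_⟩, ?_⟩
    · rfl
    · rfl
    · simp [hwu]
  have inv : ∀ t, R t → ∀ j, Submodule.span K (t.vec '' (t.cls j ∩ A)) =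
      Submodule.span K (s.vec '' (s.cls j ∩ A)) := by
    intro t ht
    induction ht with
    | refl => intro j; rfl
    | @tail t t' h1 h2 ih =>
      intro j'
      rw [← ih j']
      have ht' : R t' := h1.tail h2
      obtain ⟨w, u, j, x, hw, hu, hx, hxs, hc, hv⟩ := h2
      have hwu : u ≠ w := by rintro rfl; rw [hu] at hw; cases hw
      have hwj : ∀ j, w ∉ t.cls j := fun j h => by simp [MState.cls, hw] at h
      have hc' : t'.col = Function.update (Function.update t.col u none) w (some j) := by
        rw [hc]
      have hv' : t'.vec = Function.update t.vec w x := by rw [hv]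
      have hcls := MState.step_cls hw hu hc'
      have hwA : w ∈ A := ⟨t, h1, hw⟩
      have huA : u ∈ A := ⟨t', ht', by simp [hc', hwu]⟩
      have hxA := key t h1 w hw x hx j
      rw [hcls, hv']
      split_ifs with h
      · subst h
        have e1 : insert w (t.cls j' \ {u}) ∩ A = insert w ((t.cls j' ∩ A) \ {u}) := by
          ext i
          simp only [Set.mem_inter_iff, Set.mem_insert_iff, Set.mem_sdiff, Set.mem_singleton_iff]
          constructor
          · tauto
          · rintro (rfl | h)
            · tauto
            · tauto
        have e2 : t.cls j' ∩ A = insert u ((t.cls j' ∩ A) \ {u}) := by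
          rw [Set.insert_sdiff_singleton, Set.insert_eq_of_mem]
          exact ⟨hu, huA⟩
        have hxs' : x ∉ Submodule.span K (t.vec '' ((t.cls j' ∩ A) \ {u})) := by
          intro hcon
          refine hxs (Submodule.span_mono (Set.image_mono ?_) hcon)
          exact Set.sdiff_subset_sdiff_left Set.inter_subset_left
        rw [e1, Set.image_insert_eq, Function.update_self,
          update_image_eq _ _ _ _ (fun h => hwj _ h.1.1)]
        rw [e2, Set.image_insert_eq] at hxA
        have hue := mem_span_insert_exchange hxA hxs'
        conv_rhs => rw [e2, Set.image_insert_eq]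
        apply le_antisymm
        · rw [Submodule.span_le, Set.insert_subset_iff]
          refine ⟨hxA, fun y hy => Submodule.subset_span (Or.inr hy)⟩
        · rw [Submodule.span_le, Set.insert_subset_iff]
          refine ⟨hue, fun y hy => Submodule.subset_span (Or.inr hy)⟩
      · rw [update_image_eq _ _ _ _ (fun h => hwj _ h.1)]
  refine ⟨s, hs.1, A, ?_, ?_⟩
  · intro i hi hcol
    exact hi ⟨s, .refl, hcol⟩
  · rintro j w ⟨t, ht, hw⟩ x hx
    rw [SetLike.mem_coe, ← inv t ht j]
    exact key t ht w hw x hx j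

end MatroidUnion

/-! ### Packing connected spanning structures in a hypergraph -/

section Packing

theorem ncard_le_of_ker {E F ι : Type*} [AddCommGroup E] [Module ℚ E] [FiniteDimensional ℚ E]
    [AddCommGroup F] [Module ℚ F] [Finite ι]
    (f : E →ₗ[ℚ] F) (hf : Function.Surjective f) (v : ι → E) (S : Set ι)
    (hS : LinearIndepOn ℚ v S) (h : ∀ i ∈ S, f (v i) = 0) :
    S.ncard + Module.finrank ℚ F ≤ Module.finrank ℚ E := by
  classical
  have := Fintype.ofFinite S
  have h1 : Module.finrank ℚ (Submodule.span ℚ (Set.range (fun i : S => v i))) = S.ncard := by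
    rw [finrank_span_eq_card hS, ← Nat.card_eq_fintype_card, Nat.card_coe_set_eq]
  have h2 : Submodule.span ℚ (Set.range (fun i : S => v i)) ≤ LinearMap.ker f := by
    rw [Submodule.span_le]
    rintro _ ⟨i, rfl⟩
    exact h i.1 i.2
  have h3 := Submodule.finrank_mono h2
  have h4 := LinearMap.finrank_range_add_finrank_ker f
  rw [LinearMap.range_eq_top.2 hf, finrank_top] at h4
  omega

theorem le_ncard_of_span {τ ι P : Type*} [Finite τ] [DecidableEq τ] [Finite ι] [Finite P]
    (v : ι → (τ → ℚ)) (S : Set ι) (q : P → τ)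
    (h : ∀ x, ∃ p, (Pi.single x 1 - Pi.single (q p) 1 : τ → ℚ) ∈ Submodule.span ℚ (v '' S)) :
    Nat.card τ ≤ S.ncard + Nat.card P := by
  classical
  have := Fintype.ofFinite S
  have := Fintype.ofFinite P
  have := Fintype.ofFinite τ
  let U := Submodule.span ℚ (v '' S)
  let W := Submodule.span ℚ (Set.range (fun p : P => (Pi.single (q p) 1 : τ → ℚ)))
  have hU : Module.finrank ℚ U ≤ S.ncard := by
    have := finrank_range_le_card (R := ℚ) (fun i : S => v i)
    rw [← Nat.card_eq_fintype_card, Nat.card_coe_set_eq, ← Set.image_eq_range] at this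
    exact this
  have hW : Module.finrank ℚ W ≤ Nat.card P := by
    rw [Nat.card_eq_fintype_card]
    exact finrank_range_le_card (R := ℚ) _
  have htop : U ⊔ W = ⊤ := by
    rw [eq_top_iff, ← (Pi.basisFun ℚ τ).span_eq, Submodule.span_le]
    rintro _ ⟨x, rfl⟩
    obtain ⟨p, hp⟩ := h x
    rw [Pi.basisFun_apply]
    have : (Pi.single x 1 : τ → ℚ) = (Pi.single x 1 - Pi.single (q p) 1) + Pi.single (q p) 1 := by
      abel
    rw [this]
    exact Submodule.add_mem_sup hp (Submodule.subset_span ⟨p, rfl⟩)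
  have h1 := Submodule.finrank_add_le_finrank_add_finrank U W
  rw [htop, finrank_top, Module.finrank_fintype_fun_eq_card] at h1
  have h5 : Nat.card τ = Fintype.card τ := Nat.card_eq_fintype_card
  omega

variable {τ ι : Type*}

def hrel (N : ι → Set τ) (A : Set ι) (x y : τ) : Prop := ∃ i ∈ A, x ∈ N i ∧ y ∈ N i

def cstep {ℓ : ℕ} (col : ι → Option (Fin ℓ)) (a b : ι → τ) (j : Fin ℓ) (x y : τ) : Prop :=
  ∃ i, col i = some j ∧ ((x = a i ∧ y = b i) ∨ (x = b i ∧ y = a i))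

theorem packing [Finite τ] [Nonempty τ] [Finite ι] (N : ι → Set τ) (ℓ : ℕ) :
    (∃ (col : ι → Option (Fin ℓ)) (a b : ι → τ),
      (∀ i j, col i = some j → a i ∈ N i ∧ b i ∈ N i) ∧
      ∀ j x y, Relation.ReflTransGen (cstep col a b j) x y) ∨
    ∃ A : Set ι, Aᶜ.ncard + ℓ < ℓ * Nat.card (Quot (hrel N A)) := by
  classical
  have := Fintype.ofFinite τ
  let D : ι → Set (τ → ℚ) := fun i => {z | ∃ a ∈ N i, ∃ b ∈ N i, z = Pi.single a 1 - Pi.single b 1}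
  obtain ⟨s, hs, A, hA, hD⟩ := matroid_union ℚ ℓ D
  have hch : ∀ i, ∃ a b, ∀ j, s.col i = some j → a ∈ N i ∧ b ∈ N i ∧
      s.vec i = Pi.single a 1 - Pi.single b 1 := by
    intro i
    cases hi : s.col i with
    | none => exact ⟨Classical.arbitrary τ, Classical.arbitrary τ, fun j h => by cases h⟩
    | some j =>
      obtain ⟨a, ha, b, hb, h⟩ := hs.1 i j hi
      exact ⟨a, b, fun _ _ => ⟨ha, hb, h⟩⟩
  choose a b hab using hch
  by_cases hcon : ∀ j x y, Relation.ReflTransGen (cstep s.col a b j) x y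
  · exact Or.inl ⟨s.col, a, b, fun i j h => ⟨(hab i j h).1, (hab i j h).2.1⟩, hcon⟩
  right
  refine ⟨A, ?_⟩
  push Not at hcon
  obtain ⟨j0, x0, y0, hxy⟩ := hcon
  have hn : Module.finrank ℚ (τ → ℚ) = Nat.card τ := by
    rw [Module.finrank_fintype_fun_eq_card, Nat.card_eq_fintype_card]
  -- lower bound
  have hlow : ∀ j, Nat.card τ ≤ (s.cls j ∩ A).ncard + Nat.card (Quot (hrel N A)) := by
    intro j
    refine le_ncard_of_span s.vec _ (fun p : Quot (hrel N A) => p.out) ?_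
    intro x
    refine ⟨Quot.mk _ x, ?_⟩
    have h1 : Relation.EqvGen (hrel N A) x (Quot.mk (hrel N A) x).out :=
      Quot.eqvGen_exact (Quot.out_eq _).symm
    generalize (Quot.mk (hrel N A) x).out = y at h1
    induction h1 with
    | rel x y h =>
      obtain ⟨i, hi, hx, hy⟩ := h
      exact hD j i hi ⟨x, hx, y, hy, rfl⟩
    | refl x => simp
    | symm x y _ ih =>
      have := Submodule.neg_mem _ ih
      rwa [neg_sub] at this
    | trans x y z _ _ ih1 ih2 =>
      have := Submodule.add_mem _ ih1 ih2
      rwa [sub_add_sub_cancel] at this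
  have hup : ∀ j, (s.cls j).ncard + 1 ≤ Nat.card τ := by
    intro j
    let f : (τ → ℚ) →ₗ[ℚ] ℚ := ∑ x, LinearMap.proj x
    have hf1 : ∀ x, f (Pi.single x 1) = 1 := by
      intro x
      simp [f, LinearMap.sum_apply, Finset.sum_pi_single']
    have hf : Function.Surjective f := by
      intro r
      refine ⟨r • Pi.single (Classical.arbitrary τ) 1, ?_⟩
      rw [map_smul, hf1]; simp
    have := ncard_le_of_ker f hf s.vec (s.cls j) (hs.2 j) (by
      intro i hi
      rw [(hab i j hi).2.2, map_sub, hf1, hf1, sub_self])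
    rwa [hn, Module.finrank_self] at this
  have hup0 : (s.cls j0).ncard + 2 ≤ Nat.card τ := by
    let C : Set τ := {y | Relation.ReflTransGen (cstep s.col a b j0) x0 y}
    let f : (τ → ℚ) →ₗ[ℚ] ℚ × ℚ :=
      LinearMap.prod (∑ x, if x ∈ C then LinearMap.proj x else 0)
        (∑ x, if x ∈ C then 0 else LinearMap.proj x)
    have hf1 : ∀ x ∈ C, f (Pi.single x 1) = (1, 0) := by
      intro x hx
      have e1 : ∀ y, (if y ∈ C then (LinearMap.proj y : (τ → ℚ) →ₗ[ℚ] ℚ) else 0)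
          (Pi.single x 1) = if x = y then 1 else 0 := by
        intro y
        by_cases hxy : x = y
        · subst hxy; simp [hx]
        · by_cases hy : y ∈ C <;> simp [hxy, hy, Ne.symm hxy]
      have e2 : ∀ y, (if y ∈ C then 0 else (LinearMap.proj y : (τ → ℚ) →ₗ[ℚ] ℚ))
          (Pi.single x 1) = 0 := by
        intro y
        by_cases hxy : x = y
        · subst hxy; simp [hx]
        · by_cases hy : y ∈ C <;> simp [hy, Ne.symm hxy]
      simp [f, LinearMap.sum_apply, e1, e2]
    have hf2 : ∀ x, x ∉ C → f (Pi.single x 1) = (0, 1) := by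
      intro x hx
      have e1 : ∀ y, (if y ∈ C then 0 else (LinearMap.proj y : (τ → ℚ) →ₗ[ℚ] ℚ))
          (Pi.single x 1) = if x = y then 1 else 0 := by
        intro y
        by_cases hxy : x = y
        · subst hxy; simp [hx]
        · by_cases hy : y ∈ C <;> simp [hxy, hy, Ne.symm hxy]
      have e2 : ∀ y, (if y ∈ C then (LinearMap.proj y : (τ → ℚ) →ₗ[ℚ] ℚ) else 0)
          (Pi.single x 1) = 0 := by
        intro y
        by_cases hxy : x = y
        · subst hxy; simp [hx]
        · by_cases hy : y ∈ C <;> simp [hy, Ne.symm hxy]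
      simp [f, LinearMap.sum_apply, e1, e2]
    have hf : Function.Surjective f := by
      rintro ⟨r, t⟩
      refine ⟨r • Pi.single x0 1 + t • Pi.single y0 1, ?_⟩
      rw [map_add, map_smul, map_smul, hf1 x0 Relation.ReflTransGen.refl, hf2 y0 hxy]
      simp
    have := ncard_le_of_ker f hf s.vec (s.cls j0) (hs.2 j0) (by
      intro i hi
      rw [(hab i j0 hi).2.2, map_sub]
      by_cases ha : a i ∈ C
      · have hb : b i ∈ C := Relation.ReflTransGen.tail ha ⟨i, hi, Or.inl ⟨rfl, rfl⟩⟩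
        rw [hf1 _ ha, hf1 _ hb, sub_self]
      · have hb : b i ∉ C := fun hb => ha
          (Relation.ReflTransGen.tail hb ⟨i, hi, Or.inr ⟨rfl, rfl⟩⟩)
        rw [hf2 _ ha, hf2 _ hb, sub_self])
    rwa [hn, Module.finrank_prod, Module.finrank_self] at this
  have hsplit : ∀ j, (s.cls j ∩ A).ncard + (s.cls j \ A).ncard = (s.cls j).ncard := fun j =>
    Set.ncard_inter_add_ncard_sdiff_eq_ncard _ _ (Set.toFinite _)
  have hcov : Aᶜ.ncard ≤ ∑ j, (s.cls j \ A).ncard := by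
    have h1 : Aᶜ ⊆ ⋃ j, (s.cls j \ A) := by
      intro i hi
      obtain ⟨j, hj⟩ := Option.ne_none_iff_exists'.1 (hA i hi)
      exact Set.mem_iUnion.2 ⟨j, hj, hi⟩
    refine (Set.ncard_le_ncard h1 (Set.toFinite _)).trans ?_
    have := Set.ncard_iUnion_le_of_fintype (fun j => s.cls j \ A)
    exact this
  have hsum : ∑ j, ((s.cls j \ A).ncard + 1) < ∑ j : Fin ℓ, Nat.card (Quot (hrel N A)) := by
    refine Finset.sum_lt_sum (fun j _ => ?_) ⟨j0, Finset.mem_univ _, ?_⟩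
    · have := hlow j; have := hup j; have := hsplit j; omega
    · have := hlow j0; have := hsplit j0; omega
  rw [Finset.sum_add_distrib] at hsum
  simp only [Finset.sum_const, Finset.card_univ, Fintype.card_fin, smul_eq_mul, mul_one] at hsum
  omega

end Packing

/-! ### Cuts and the reduction to independent non-terminals -/

section Cuts

variable {V : Type*}

def TTE (G : SimpleGraph V) (T : Set V) : Set (Sym2 V) :=
  {e | e ∈ G.edgeSet ∧ ∀ x ∈ e, x ∈ T}

def crossE (X : Set (Sym2 V)) (A B : Set V) : Set (Sym2 V) :=
  {e | e ∈ X ∧ (∃ x ∈ e, x ∈ A) ∧ ∃ y ∈ e, y ∈ B}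

noncomputable def cutval (X : Set (Sym2 V)) (A B : Set V) : ℕ :=
  (A ∪ B)ᶜ.ncard + (crossE X A B).ncard

def CutProp (T : Set V) (X : Set (Sym2 V)) (k : ℕ) (M : SimpleGraph V) : Prop :=
  ∀ A B : Set V, Disjoint A B → T ⊆ A ∪ B → (A ∩ T).Nonempty → (B ∩ T).Nonempty →
    (∀ x ∈ A, ∀ y ∈ B, ¬ M.Adj x y) → k ≤ cutval X A B

theorem cutval_comm (X : Set (Sym2 V)) (A B : Set V) : cutval X A B = cutval X B A := by
  have : crossE X A B = crossE X B A := by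
    ext e; simp only [crossE, Set.mem_ofPred_eq]; tauto
  rw [cutval, cutval, this, Set.union_comm]

theorem ncard_submod {α : Type*} [Finite α] (S1 S2 S3 S4 : Set α) (h1 : S3 ∪ S4 ⊆ S1 ∪ S2)
    (h2 : S3 ∩ S4 ⊆ S1 ∩ S2) : S3.ncard + S4.ncard ≤ S1.ncard + S2.ncard := by
  have e1 := Set.ncard_union_add_ncard_inter S1 S2
  have e2 := Set.ncard_union_add_ncard_inter S3 S4
  have e3 := Set.ncard_le_ncard h1 (Set.toFinite _)
  have e4 := Set.ncard_le_ncard h2 (Set.toFinite _)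
  omega

def noTT (G : SimpleGraph V) (T : Set V) : SimpleGraph V where
  Adj x y := G.Adj x y ∧ ¬ (x ∈ T ∧ y ∈ T)
  symm := ⟨fun x y h => ⟨h.1.symm, fun h' => h.2 ⟨h'.2, h'.1⟩⟩⟩
  loopless := ⟨fun x h => G.loopless.irrefl x h.1⟩

variable [Finite V]

theorem cut_of_paths {G : SimpleGraph V} {T : Set V} {A B : Set V} (hAB : Disjoint A B)
    (hT : T ⊆ A ∪ B) {u v : V} (hu : u ∈ A ∩ T) (hv : v ∈ B ∩ T)
    (hM : ∀ x ∈ A, ∀ y ∈ B, ¬ (noTT G T).Adj x y) {n : ℕ} (h : HasElemPaths G T u v n) :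
    n ≤ cutval (TTE G T) A B := by
  classical
  obtain ⟨P, hP, hd⟩ := h
  have hvA : v ∉ A := fun h => Set.disjoint_left.1 hAB h hv.1
  have key : ∀ i, ∃ d ∈ (P i).darts, d.fst ∈ A ∧ d.snd ∉ A := fun i =>
    (P i).exists_boundary_dart A hu.1 hvA
  choose d hdm hd1 hd2 using key
  let f : Fin n → V ⊕ Sym2 V := fun i => if (d i).snd ∈ B then Sum.inr (d i).edge
    else Sum.inl (d i).snd
  let S : Set (V ⊕ Sym2 V) := Sum.inl '' (A ∪ B)ᶜ ∪ Sum.inr '' crossE (TTE G T) A B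
  have hS : S.ncard ≤ cutval (TTE G T) A B := by
    refine (Set.ncard_union_le _ _).trans ?_
    rw [Set.ncard_image_of_injective _ Sum.inl_injective,
      Set.ncard_image_of_injective _ Sum.inr_injective]
    exact le_rfl
  have hfS : ∀ i, f i ∈ S := by
    intro i
    by_cases hB : (d i).snd ∈ B
    · have : f i = Sum.inr (d i).edge := by simp [f, hB]
      rw [this]
      refine Or.inr ⟨_, ?_, rfl⟩
      have h1 := hM _ (hd1 i) _ hB
      have h2 : (d i).fst ∈ T ∧ (d i).snd ∈ T := by
        by_contra hcon
        exact h1 ⟨(d i).adj, hcon⟩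
      refine ⟨⟨(d i).edge_mem, ?_⟩, ⟨(d i).fst, ?_, hd1 i⟩, ⟨(d i).snd, ?_, hB⟩⟩
      · intro x hx
        rcases Sym2.mem_iff.1 (show x ∈ s((d i).fst, (d i).snd) from hx) with rfl | rfl
        · exact h2.1
        · exact h2.2
      · exact Sym2.mem_mk_left _ _
      · exact Sym2.mem_mk_right _ _
    · have : f i = Sum.inl (d i).snd := by simp [f, hB]
      rw [this]
      refine Or.inl ⟨_, ?_, rfl⟩
      rintro (h | h)
      · exact hd2 i h
      · exact hB h
  have hinj : Function.Injective f := by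
    intro i j hij
    by_contra hne
    have hdij := hd i j hne
    by_cases hBi : (d i).snd ∈ B <;> by_cases hBj : (d j).snd ∈ B
    · simp only [f, hBi, hBj, if_true, Sum.inr.injEq] at hij
      refine hdij.1 (d i).edge (List.mem_map_of_mem (hdm i)) ?_
      rw [hij]
      exact List.mem_map_of_mem (hdm j)
    · simp [f, hBi, hBj] at hij
    · simp [f, hBi, hBj] at hij
    · simp only [f, hBi, hBj, if_false, Sum.inl.injEq] at hij
      have h1 := hdij.2 (d i).snd ((P i).dart_snd_mem_support_of_mem_darts (hdm i))
        (hij ▸ (P j).dart_snd_mem_support_of_mem_darts (hdm j))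
      have h2 : (d i).snd ∈ T := by
        rcases h1 with h1 | h1 | h1
        · exact h1
        · rw [h1]; exact hu.2
        · rw [Set.mem_singleton_iff.1 h1]; exact hv.2
      rcases hT h2 with h | h
      · exact hd2 i h
      · exact hBi h
  have h1 : (Set.range f).ncard ≤ S.ncard :=
    Set.ncard_le_ncard (by rintro _ ⟨i, rfl⟩; exact hfS i) (Set.toFinite _)
  rw [← Set.image_univ, Set.ncard_image_of_injective _ hinj, Set.ncard_univ,
    Nat.card_eq_fintype_card, Fintype.card_fin] at h1
  exact h1.trans hS

theorem cut_base {G : SimpleGraph V} {T : Set V} {k : ℕ}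
    (hconn : ∀ u ∈ T, ∀ v ∈ T, u ≠ v → k ≤ elemConn G T u v) :
    CutProp T (TTE G T) k (noTT G T) := by
  intro A B hAB hT hA hB hM
  obtain ⟨u, hu⟩ := hA
  obtain ⟨v, hv⟩ := hB
  have huv : u ≠ v := by rintro rfl; exact Set.disjoint_left.1 hAB hu.1 hv.1
  rcases Nat.eq_zero_or_pos k with rfl | hk
  · exact Nat.zero_le _
  have h1 := hconn u hu.2 v hv.2 huv
  have h2 : ∀ n ∈ {n | HasElemPaths G T u v n}, n ≤ cutval (TTE G T) A B := fun n hn =>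
    cut_of_paths hAB hT hu hv hM hn
  have h3 : elemConn G T u v ∈ {n | HasElemPaths G T u v n} := by
    refine Nat.sSup_mem ?_ ⟨_, h2⟩
    by_contra hcon
    rw [Set.not_nonempty_iff_eq_empty] at hcon
    rw [elemConn, hcon, csSup_empty, bot_eq_zero] at h1
    omega
  exact h1.trans (h2 _ h3)

theorem uncross1 {T : Set V} {X : Set (Sym2 V)} {k : ℕ} {M : SimpleGraph V}
    (hM : CutProp T X k M) {A1 B1 A2 B2 : Set V} (h1 : Disjoint A1 B1) (h2 : Disjoint A2 B2)
    (hT1 : T ⊆ A1 ∪ B1) (hT2 : T ⊆ A2 ∪ B2)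
    (hA : (A1 ∩ A2 ∩ T).Nonempty) (hB : (B1 ∩ B2 ∩ T).Nonempty)
    (he1 : ∀ x ∈ A1, ∀ y ∈ B1, M.Adj x y → x ∉ A2 ∪ B2 ∧ y ∉ A2 ∪ B2)
    (he2 : ∀ x ∈ A2, ∀ y ∈ B2, ¬ M.Adj x y) :
    2 * k ≤ cutval X A1 B1 + cutval X A2 B2 := by
  have c1 : k ≤ cutval X (A1 ∩ A2) (B1 ∪ B2) := by
    refine hM _ _ ?_ ?_ hA ?_ ?_
    · rw [Set.disjoint_left] at h1 h2 ⊢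
      rintro x ⟨hx1, hx2⟩ (h | h)
      · exact h1 hx1 h
      · exact h2 hx2 h
    · intro t ht
      have := hT1 ht; have := hT2 ht
      simp only [Set.mem_union, Set.mem_inter_iff] at *
      tauto
    · exact hB.mono (fun x hx => ⟨Or.inl hx.1.1, hx.2⟩)
    · rintro x ⟨hx1, hx2⟩ y (hy | hy) hxy
      · exact (he1 x hx1 y hy hxy).1 (Or.inl hx2)
      · exact he2 x hx2 y hy hxy
  have c2 : k ≤ cutval X (A1 ∪ A2) (B1 ∩ B2) := by
    refine hM _ _ ?_ ?_ ?_ hB ?_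
    · rw [Set.disjoint_left] at h1 h2 ⊢
      rintro x (hx | hx) ⟨hy1, hy2⟩
      · exact h1 hx hy1
      · exact h2 hx hy2
    · intro t ht
      have := hT1 ht; have := hT2 ht
      simp only [Set.mem_union, Set.mem_inter_iff] at *
      tauto
    · exact hA.mono (fun x hx => ⟨Or.inl hx.1.1, hx.2⟩)
    · rintro x (hx | hx) y ⟨hy1, hy2⟩ hxy
      · exact (he1 x hx y hy1 hxy).2 (Or.inr hy2)
      · exact he2 x hx y hy2 hxy
  have s1 := ncard_submod (A1 ∪ B1)ᶜ (A2 ∪ B2)ᶜ (A1 ∩ A2 ∪ (B1 ∪ B2))ᶜ ((A1 ∪ A2) ∪ B1 ∩ B2)ᶜ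
    (by
      intro x hx
      have d1 : x ∈ A1 → x ∉ B1 := fun h => Set.disjoint_left.1 h1 h
      have d2 : x ∈ A2 → x ∉ B2 := fun h => Set.disjoint_left.1 h2 h
      simp only [Set.mem_union, Set.mem_inter_iff, Set.mem_compl_iff] at *
      tauto)
    (by
      intro x hx
      simp only [Set.mem_union, Set.mem_inter_iff, Set.mem_compl_iff] at *
      tauto)
  have s2 := ncard_submod (crossE X A1 B1) (crossE X A2 B2) (crossE X (A1 ∩ A2) (B1 ∪ B2))
    (crossE X (A1 ∪ A2) (B1 ∩ B2))
    (by
      rintro e (⟨heX, ⟨x, hx, hxA, hxA'⟩, ⟨y, hy, hyB | hyB⟩⟩ |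
        ⟨heX, ⟨x, hx, hxA | hxA⟩, ⟨y, hy, hyB, hyB'⟩⟩)
      · exact Or.inl ⟨heX, ⟨x, hx, hxA⟩, ⟨y, hy, hyB⟩⟩
      · exact Or.inr ⟨heX, ⟨x, hx, hxA'⟩, ⟨y, hy, hyB⟩⟩
      · exact Or.inl ⟨heX, ⟨x, hx, hxA⟩, ⟨y, hy, hyB⟩⟩
      · exact Or.inr ⟨heX, ⟨x, hx, hxA⟩, ⟨y, hy, hyB'⟩⟩)
    (by
      rintro e ⟨⟨heX, ⟨x, hx, hxA, hxA'⟩, _⟩, ⟨_, _, ⟨y, hy, hyB, hyB'⟩⟩⟩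
      exact ⟨⟨heX, ⟨x, hx, hxA⟩, ⟨y, hy, hyB⟩⟩, ⟨heX, ⟨x, hx, hxA'⟩, ⟨y, hy, hyB'⟩⟩⟩)
  unfold cutval at *
  omega

theorem uncross {T : Set V} {X : Set (Sym2 V)} {k : ℕ} {M : SimpleGraph V}
    (hM : CutProp T X k M) {A1 B1 A2 B2 : Set V} (h1 : Disjoint A1 B1) (h2 : Disjoint A2 B2)
    (hT1 : T ⊆ A1 ∪ B1) (hT2 : T ⊆ A2 ∪ B2)
    (hA1 : (A1 ∩ T).Nonempty) (hB1 : (B1 ∩ T).Nonempty)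
    (hA2 : (A2 ∩ T).Nonempty) (hB2 : (B2 ∩ T).Nonempty)
    (he1 : ∀ x ∈ A1, ∀ y ∈ B1, M.Adj x y → x ∉ A2 ∪ B2 ∧ y ∉ A2 ∪ B2)
    (he2 : ∀ x ∈ A2, ∀ y ∈ B2, ¬ M.Adj x y) :
    2 * k ≤ cutval X A1 B1 + cutval X A2 B2 := by
  by_cases hp : (A1 ∩ A2 ∩ T).Nonempty ∧ (B1 ∩ B2 ∩ T).Nonempty
  · exact uncross1 hM h1 h2 hT1 hT2 hp.1 hp.2 he1 he2
  · rw [cutval_comm X A2 B2]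
    have hq : (A1 ∩ B2 ∩ T).Nonempty ∧ (B1 ∩ A2 ∩ T).Nonempty := by
      obtain ⟨a1, ha1, ha1T⟩ := hA1
      obtain ⟨b1, hb1, hb1T⟩ := hB1
      obtain ⟨a2, ha2, ha2T⟩ := hA2
      obtain ⟨b2, hb2, hb2T⟩ := hB2
      rw [not_and_or] at hp
      rcases hp with hp | hp
      · constructor
        · refine ⟨a1, ⟨ha1, ?_⟩, ha1T⟩
          exact (hT2 ha1T).resolve_left (fun h => hp ⟨a1, ⟨ha1, h⟩, ha1T⟩)
        · refine ⟨a2, ⟨?_, ha2⟩, ha2T⟩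
          exact (hT1 ha2T).resolve_left (fun h => hp ⟨a2, ⟨h, ha2⟩, ha2T⟩)
      · constructor
        · refine ⟨b2, ⟨?_, hb2⟩, hb2T⟩
          exact (hT1 hb2T).resolve_right (fun h => hp ⟨b2, ⟨h, hb2⟩, hb2T⟩)
        · refine ⟨b1, ⟨hb1, ?_⟩, hb1T⟩
          exact (hT2 hb1T).resolve_right (fun h => hp ⟨b1, ⟨hb1, h⟩, hb1T⟩)
    refine uncross1 hM h1 h2.symm hT1 (by rwa [Set.union_comm]) hq.1 hq.2 ?_ ?_
    · intro x hx y hy hxy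
      rw [Set.union_comm]
      exact he1 x hx y hy hxy
    · intro x hx y hy hxy
      exact he2 y hy x hx hxy.symm

/-- delete the edge `pq` -/
def delE (M : SimpleGraph V) (p q : V) : SimpleGraph V where
  Adj x y := M.Adj x y ∧ ¬ ((x = p ∧ y = q) ∨ (x = q ∧ y = p))
  symm := ⟨fun x y h => ⟨h.1.symm, by have := h.2; tauto⟩⟩
  loopless := ⟨fun x h => M.loopless.irrefl x h.1⟩

/-- contract `q` into `p`, keeping `q` as an isolated vertex -/
def conE (M : SimpleGraph V) (p q : V) : SimpleGraph V where
  Adj x y := x ≠ y ∧ x ≠ q ∧ y ≠ q ∧ (M.Adj x y ∨ (x = p ∧ M.Adj q y) ∨ (y = p ∧ M.Adj q x))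
  symm := ⟨fun x y h => ⟨h.1.symm, h.2.2.1, h.2.1, by
    rcases h.2.2.2 with h | h | h
    · exact Or.inl h.symm
    · exact Or.inr (Or.inr h)
    · exact Or.inr (Or.inl h)⟩⟩
  loopless := ⟨fun x h => h.1 rfl⟩

theorem con_aux {T : Set V} {X : Set (Sym2 V)} (hX : ∀ e ∈ X, ∀ x ∈ e, x ∈ T) {k : ℕ}
    {M : SimpleGraph V} (hM : CutProp T X k M) {p q : V} (hq : q ∉ T) (hne' : p ≠ q)
    {A B : Set V} (hAB : Disjoint A B) (hT : T ⊆ A ∪ B) (hA : (A ∩ T).Nonempty)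
    (hB : (B ∩ T).Nonempty) (he : ∀ x ∈ A, ∀ y ∈ B, ¬ (conE M p q).Adj x y) (hpA : p ∈ A) :
    k ≤ cutval X A B := by
  have hne : ∀ t ∈ T, t ≠ q := by rintro t ht rfl; exact hq ht
  have h1 : k ≤ cutval X (insert q A) (B \ {q}) := by
    refine hM _ _ ?_ ?_ ?_ ?_ ?_
    · rw [Set.disjoint_left] at hAB ⊢
      rintro x (rfl | hx) ⟨h1, h2⟩
      · exact h2 rfl
      · exact hAB hx h1
    · intro t ht
      rcases hT ht with h | h
      · exact Or.inl (Or.inr h)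
      · exact Or.inr ⟨h, hne t ht⟩
    · exact hA.mono (fun x hx => ⟨Or.inr hx.1, hx.2⟩)
    · exact hB.mono (fun x hx => ⟨⟨hx.1, hne x hx.2⟩, hx.2⟩)
    · rintro x hx y ⟨hy, hyq⟩ hxy
      have hpy : p ≠ y := by rintro rfl; exact Set.disjoint_left.1 hAB hpA hy
      by_cases hxq : x = q
      · subst hxq
        exact he p hpA y hy ⟨hpy, hne', hyq, Or.inr (Or.inl ⟨rfl, hxy⟩)⟩
      · exact he x (hx.resolve_left hxq) y hy ⟨hxy.ne, hxq, hyq, Or.inl hxy⟩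
  refine h1.trans (add_le_add (Set.ncard_le_ncard ?_ (Set.toFinite _))
    (Set.ncard_le_ncard ?_ (Set.toFinite _)))
  · intro x hx h
    apply hx
    rcases h with h | h
    · exact Or.inl (Or.inr h)
    · by_cases hxq : x = q
      · exact Or.inl (Or.inl hxq)
      · exact Or.inr ⟨h, hxq⟩
  · rintro e ⟨heX, ⟨x, hx, hxA⟩, ⟨y, hy, hyB⟩⟩
    exact ⟨heX, ⟨x, hx, hxA.resolve_left (hne x (hX e heX x hx))⟩, ⟨y, hy, hyB.1⟩⟩

theorem del_or_con {T : Set V} {X : Set (Sym2 V)} (hX : ∀ e ∈ X, ∀ x ∈ e, x ∈ T) {k : ℕ}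
    {M : SimpleGraph V} (hM : CutProp T X k M) {p q : V} (hp : p ∉ T) (hq : q ∉ T)
    (hpq : M.Adj p q) : CutProp T X k (delE M p q) ∨ CutProp T X k (conE M p q) := by
  by_contra hcon
  rw [not_or] at hcon
  obtain ⟨hd, hc⟩ := hcon
  unfold CutProp at hd hc
  push Not at hd hc
  obtain ⟨A1, B1, hAB1, hT1, hA1, hB1, he1, hv1⟩ := hd
  obtain ⟨A2, B2, hAB2, hT2, hA2, hB2, he2, hv2⟩ := hc
  have hne : ∀ t ∈ T, t ≠ q := by rintro t ht rfl; exact hq ht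
  have hpA : p ∉ A2 := fun h => absurd (con_aux hX hM hq hpq.ne hAB2 hT2 hA2 hB2 he2 h) (by omega)
  have hpB : p ∉ B2 := fun h => absurd (con_aux hX hM hq hpq.ne hAB2.symm (by rwa [Set.union_comm])
    hB2 hA2 (fun x hx y hy hxy => he2 y hy x hx hxy.symm) h) (by rw [cutval_comm]; omega)
  have h3 := uncross hM (A2 := A2 \ {q}) (B2 := B2 \ {q}) hAB1
    (hAB2.mono Set.sdiff_subset Set.sdiff_subset) hT1 ?_ hA1 hB1 ?_ ?_ ?_ ?_
  · have h4 : cutval X (A2 \ {q}) (B2 \ {q}) ≤ cutval X A2 B2 + 1 := by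
      have h5 : (A2 \ {q} ∪ B2 \ {q})ᶜ ⊆ insert q (A2 ∪ B2)ᶜ := by
        intro x hx
        simp only [Set.mem_compl_iff, Set.mem_union, Set.mem_sdiff, Set.mem_singleton_iff,
          Set.mem_insert_iff] at *
        tauto
      have h6 := (Set.ncard_le_ncard h5 (Set.toFinite _)).trans (Set.ncard_insert_le _ _)
      have h7 : crossE X (A2 \ {q}) (B2 \ {q}) ⊆ crossE X A2 B2 := by
        rintro e ⟨heX, ⟨x, hx, hxA⟩, ⟨y, hy, hyB⟩⟩
        exact ⟨heX, ⟨x, hx, hxA.1⟩, ⟨y, hy, hyB.1⟩⟩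
      have h8 := Set.ncard_le_ncard h7 (Set.toFinite _)
      unfold cutval
      omega
    omega
  · intro t ht
    rcases hT2 ht with h | h
    · exact Or.inl ⟨h, hne t ht⟩
    · exact Or.inr ⟨h, hne t ht⟩
  · exact hA2.mono (fun x hx => ⟨⟨hx.1, hne x hx.2⟩, hx.2⟩)
  · exact hB2.mono (fun x hx => ⟨⟨hx.1, hne x hx.2⟩, hx.2⟩)
  · intro x hx y hy hxy
    have h5 : (x = p ∧ y = q) ∨ (x = q ∧ y = p) := by
      by_contra hcon
      exact he1 x hx y hy ⟨hxy, hcon⟩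
    have hp' : p ∉ A2 \ {q} ∪ B2 \ {q} := by
      rintro (h | h)
      · exact hpA h.1
      · exact hpB h.1
    have hq' : q ∉ A2 \ {q} ∪ B2 \ {q} := by
      rintro (h | h)
      · exact h.2 rfl
      · exact h.2 rfl
    rcases h5 with ⟨rfl, rfl⟩ | ⟨rfl, rfl⟩
    · exact ⟨hp', hq'⟩
    · exact ⟨hq', hp'⟩
  · rintro x ⟨hx, hxq⟩ y ⟨hy, hyq⟩ hxy
    exact he2 x hx y hy ⟨hxy.ne, hxq, hyq, Or.inl hxy⟩

structure Model (G : SimpleGraph V) (T : Set V) (k : ℕ) (M : SimpleGraph V)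
    (B : V → Set V) : Prop where
  hT : ∀ t ∈ T, B t = {t}
  disj : ∀ x y, x ≠ y → Disjoint (B x) (B y)
  conn : ∀ x, CS G (B x)
  adj : ∀ x y, M.Adj x y → ∃ a ∈ B x, ∃ b ∈ B y, G.Adj a b
  noTT : ∀ x y, M.Adj x y → ¬ (x ∈ T ∧ y ∈ T)
  cut : CutProp T (TTE G T) k M

theorem cs_union {G : SimpleGraph V} {S S' : Set V} (h : CS G S) (h' : CS G S') {a b : V}
    (ha : a ∈ S) (hb : b ∈ S') (hab : G.Adj a b) : CS G (S ∪ S') := by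
  refine cs_of_root a ?_
  rintro z (hz | hz)
  · exact rtg_mono Set.subset_union_left (h a ha z hz)
  · exact Relation.ReflTransGen.head ⟨hab, Or.inl ha, Or.inr hb⟩
      (rtg_mono Set.subset_union_right (h' b hb z hz))

theorem Model.step {G : SimpleGraph V} {T : Set V} {k : ℕ} {M : SimpleGraph V}
    {B : V → Set V} (h : Model G T k M B) {p q : V} (hp : p ∉ T) (hq : q ∉ T) (hpq : M.Adj p q) :
    ∃ M' B', Model G T k M' B' ∧ M'.edgeSet.ncard < M.edgeSet.ncard := by
  classical
  rcases del_or_con (X := TTE G T) (fun e he => he.2) h.cut hp hq hpq with hc | hc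
  · refine ⟨delE M p q, B, ⟨h.hT, h.disj, h.conn, fun x y hxy => h.adj x y hxy.1,
      fun x y hxy => h.noTT x y hxy.1, hc⟩, ?_⟩
    refine Set.ncard_lt_ncard ⟨?_, ?_⟩ (Set.toFinite _)
    · intro e he
      induction e with
      | _ x y => exact he.1
    · intro hsub
      have : s(p, q) ∈ (delE M p q).edgeSet := hsub hpq
      exact this.2 (Or.inl ⟨rfl, rfl⟩)
  · refine ⟨conE M p q, fun x => if x = q then ∅ else if x = p then B p ∪ B q else B x,
      ⟨?_, ?_, ?_, ?_, ?_, hc⟩, ?_⟩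
    · intro t ht
      have h1 : t ≠ q := by rintro rfl; exact hq ht
      have h2 : t ≠ p := by rintro rfl; exact hp ht
      simp [h1, h2, h.hT t ht]
    · have hd : ∀ x, x ≠ p → x ≠ q → Disjoint (B p ∪ B q) (B x) := fun x hx hxq =>
        Set.disjoint_union_left.2 ⟨h.disj _ _ hx.symm, h.disj _ _ hxq.symm⟩
      intro x y hxy
      by_cases hxq : x = q
      · rw [if_pos hxq]; exact Set.empty_disjoint _
      by_cases hyq : y = q
      · rw [if_pos hyq]; exact Set.disjoint_empty _
      rw [if_neg hxq, if_neg hyq]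
      by_cases hxp : x = p
      · have hyp : y ≠ p := fun h => hxy (hxp.trans h.symm)
        rw [if_pos hxp, if_neg hyp]
        exact hd y hyp hyq
      rw [if_neg hxp]
      by_cases hyp : y = p
      · rw [if_pos hyp]
        exact (hd x hxp hxq).symm
      rw [if_neg hyp]
      exact h.disj _ _ hxy
    · intro x
      split_ifs with h1 h2
      · intro a ha; exact absurd ha (Set.notMem_empty a)
      · obtain ⟨a, ha, b, hb, hab⟩ := h.adj p q hpq
        exact cs_union (h.conn p) (h.conn q) ha hb hab
      · exact h.conn x
    · have hs : ∀ x, x ≠ q → B x ⊆ (if x = q then ∅ else if x = p then B p ∪ B q else B x) := by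
        intro x hx
        rw [if_neg hx]
        split_ifs with h1
        · rw [h1]; exact Set.subset_union_left
        · exact subset_rfl
      have hs' : B q ⊆ (if p = q then ∅ else if p = p then B p ∪ B q else B p) := by
        rw [if_neg hpq.ne, if_pos rfl]
        exact Set.subset_union_right
      rintro x y ⟨hxy, hxq, hyq, hadj | ⟨rfl, hadj⟩ | ⟨rfl, hadj⟩⟩
      · obtain ⟨a, ha, b, hb, hab⟩ := h.adj x y hadj
        exact ⟨a, hs x hxq ha, b, hs y hyq hb, hab⟩
      · obtain ⟨a, ha, b, hb, hab⟩ := h.adj q y hadj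
        exact ⟨a, hs' ha, b, hs y hyq hb, hab⟩
      · obtain ⟨a, ha, b, hb, hab⟩ := h.adj q x hadj
        exact ⟨b, hs x hxq hb, a, hs' ha, hab.symm⟩
    · rintro x y ⟨hxy, hxq, hyq, hadj | ⟨rfl, hadj⟩ | ⟨rfl, hadj⟩⟩
      · exact h.noTT x y hadj
      · exact fun h' => hp h'.1
      · exact fun h' => hp h'.2
    · let φ : V → V := fun x => if x = q then p else x
      have h1 : (conE M p q).edgeSet ⊆ Sym2.map φ '' (M.edgeSet \ {s(p, q)}) := by
        intro e he
        induction e with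
        | _ x y =>
        obtain ⟨hxy, hxq, hyq, hadj | ⟨rfl, hadj⟩ | ⟨rfl, hadj⟩⟩ := he
        · refine ⟨s(x, y), ⟨hadj, ?_⟩, by simp [φ, hxq, hyq]⟩
          rw [Set.mem_singleton_iff, Sym2.eq_iff]
          rintro (⟨_, h⟩ | ⟨h, _⟩)
          · exact hyq h
          · exact hxq h
        · refine ⟨s(q, y), ⟨hadj, ?_⟩, by simp [φ, hyq]⟩
          rw [Set.mem_singleton_iff, Sym2.eq_iff]
          rintro (⟨_, h⟩ | ⟨_, h⟩)
          · exact hyq h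
          · exact hxy h.symm
        · refine ⟨s(q, x), ⟨hadj, ?_⟩, by simp [φ, hxq, Sym2.eq_swap]⟩
          rw [Set.mem_singleton_iff, Sym2.eq_iff]
          rintro (⟨_, h⟩ | ⟨_, h⟩)
          · exact hxq h
          · exact hxy h
      refine (Set.ncard_le_ncard h1 (Set.toFinite _)).trans_lt ?_
      refine (Set.ncard_image_le (Set.toFinite _)).trans_lt ?_
      exact Set.ncard_sdiff_singleton_lt_of_mem hpq (Set.toFinite _)

theorem exists_model {G : SimpleGraph V} {T : Set V} {k : ℕ}
    (hconn : ∀ u ∈ T, ∀ v ∈ T, u ≠ v → k ≤ elemConn G T u v) :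
    ∃ M B, Model G T k M B ∧ ∀ p q, p ∉ T → q ∉ T → ¬ M.Adj p q := by
  classical
  have h0 : ∃ n, ∃ M B, Model G T k M B ∧ M.edgeSet.ncard = n := by
    refine ⟨_, _root_.noTT G T, fun x => {x}, ⟨fun _ _ => rfl, ?_, ?_, ?_, ?_, cut_base hconn⟩, rfl⟩
    · intro x y hxy; simpa using hxy
    · rintro x a rfl b rfl; exact .refl
    · exact fun x y hxy => ⟨x, rfl, y, rfl, hxy.1⟩
    · exact fun x y hxy => hxy.2
  obtain ⟨M, B, hM, hn⟩ := Nat.find_spec h0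
  refine ⟨M, B, hM, fun p q hp hq hpq => ?_⟩
  obtain ⟨M', B', hM', hlt⟩ := hM.step hp hq hpq
  have := Nat.find_min' h0 ⟨M', B', hM', rfl⟩
  omega

end Cuts

/-! ### Counting -/

section Counting

theorem sum_ncard {α β : Type*} [Fintype α] [Finite β] (r : α → β → Prop) :
    ∑ a, {b | r a b}.ncard = {p : α × β | r p.1 p.2}.ncard := by
  classical
  have := Fintype.ofFinite β
  simp_rw [Set.ncard_eq_toFinset_card', Set.toFinset_ofPred]
  rw [Finset.card_filter, Fintype.sum_prod_type]
  refine Finset.sum_congr rfl fun a _ => ?_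
  rw [Finset.card_filter]

theorem ncard_swap {α β : Type*} (r : α → β → Prop) :
    {p : α × β | r p.1 p.2}.ncard = {p : β × α | r p.2 p.1}.ncard := by
  rw [← Set.ncard_image_of_injective _ (Prod.swap_injective (α := α) (β := β))]
  congr 1
  ext ⟨b, a⟩
  simp

variable {V : Type u} [Fintype V] {G : SimpleGraph V} {T : Set V} {k : ℕ} {M : SimpleGraph V}
  {B : V → Set V}

/-- the hyperedges on the terminals -/
def hN (G : SimpleGraph V) (T : Set V) (M : SimpleGraph V) : V ⊕ Sym2 V → Set T
  | Sum.inl w => {t | M.Adj w t}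
  | Sum.inr e => {t | e ∈ TTE G T ∧ (t : V) ∈ e}

theorem Model.notMem (h : Model G T k M B) {w : V} {t : T} (ht : t ∈ hN G T M (Sum.inl w)) :
    w ∉ T := fun hw => h.noTT w t ht ⟨hw, t.2⟩

theorem Model.adjT (h : Model G T k M B) {w : V} {t : T} (ht : t ∈ hN G T M (Sum.inl w)) :
    ∃ a ∈ B w, G.Adj a t := by
  obtain ⟨a, ha, b, hb, hab⟩ := h.adj w t ht
  rw [h.hT t t.2] at hb
  rw [Set.mem_singleton_iff.1 hb] at hab
  exact ⟨a, ha, hab⟩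

theorem mk_eq_of_mem {A : Set (V ⊕ Sym2 V)} {i : V ⊕ Sym2 V} (hi : i ∈ A) {t t' : T}
    (ht : t ∈ hN G T M i) (ht' : t' ∈ hN G T M i) :
    Quot.mk (hrel (hN G T M) A) t = Quot.mk (hrel (hN G T M) A) t' :=
  Quot.sound ⟨i, hi, ht, ht'⟩

theorem part_cut (h : Model G T k M B) (hind : ∀ p q, p ∉ T → q ∉ T → ¬ M.Adj p q)
    (A : Set (V ⊕ Sym2 V)) (c c' : Quot (hrel (hN G T M) A)) (hcc : c' ≠ c) :
    k ≤ {w | Sum.inl w ∉ A ∧ ∃ t ∈ hN G T M (Sum.inl w), Quot.mk _ t = c}.ncard +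
      {e | Sum.inr e ∉ A ∧ ∃ t ∈ hN G T M (Sum.inr e), Quot.mk _ t = c}.ncard := by
  let A' : Set V := {x | (∃ hx : x ∈ T, Quot.mk (hrel (hN G T M) A) ⟨x, hx⟩ = c) ∨
    (x ∉ T ∧ ∀ t ∈ hN G T M (Sum.inl x), Quot.mk (hrel (hN G T M) A) t = c)}
  let B' : Set V := {x | (∃ hx : x ∈ T, Quot.mk (hrel (hN G T M) A) ⟨x, hx⟩ ≠ c) ∨
    (x ∉ T ∧ (∀ t ∈ hN G T M (Sum.inl x), Quot.mk (hrel (hN G T M) A) t ≠ c) ∧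
      ∃ t, t ∈ hN G T M (Sum.inl x))}
  have h1 := h.cut A' B' ?_ ?_ ?_ ?_ ?_
  · refine h1.trans (add_le_add (Set.ncard_le_ncard ?_ (Set.toFinite _))
      (Set.ncard_le_ncard ?_ (Set.toFinite _)))
    · intro w hw
      rw [Set.mem_compl_iff, Set.mem_union, not_or] at hw
      obtain ⟨hA, hB⟩ := hw
      have hwT : w ∉ T := by
        intro hwT
        by_cases hm : Quot.mk (hrel (hN G T M) A) ⟨w, hwT⟩ = c
        · exact hA (Or.inl ⟨hwT, hm⟩)
        · exact hB (Or.inl ⟨hwT, hm⟩)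
      have h2 : ∃ t ∈ hN G T M (Sum.inl w), Quot.mk (hrel (hN G T M) A) t ≠ c := by
        by_contra hcon
        push Not at hcon
        exact hA (Or.inr ⟨hwT, hcon⟩)
      obtain ⟨t, ht, htc⟩ := h2
      have h3 : ∃ t ∈ hN G T M (Sum.inl w), Quot.mk (hrel (hN G T M) A) t = c := by
        by_contra hcon
        push Not at hcon
        exact hB (Or.inr ⟨hwT, hcon, t, ht⟩)
      refine ⟨fun hwA => ?_, h3⟩
      obtain ⟨t', ht', htc'⟩ := h3
      exact htc ((mk_eq_of_mem hwA ht ht').trans htc')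
    · rintro e ⟨heX, ⟨x, hx, hxA⟩, ⟨y, hy, hyB⟩⟩
      have hxT := heX.2 x hx
      have hyT := heX.2 y hy
      rcases hxA with ⟨_, hxc⟩ | ⟨h', _⟩
      swap
      · exact absurd hxT h'
      rcases hyB with ⟨_, hyc⟩ | ⟨h', _⟩
      swap
      · exact absurd hyT h'
      have m1 : (⟨x, hxT⟩ : T) ∈ hN G T M (Sum.inr e) := ⟨heX, hx⟩
      have m2 : (⟨y, hyT⟩ : T) ∈ hN G T M (Sum.inr e) := ⟨heX, hy⟩
      exact ⟨fun heA => hyc ((mk_eq_of_mem heA m2 m1).trans hxc), _, m1, hxc⟩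
  · rw [Set.disjoint_left]
    rintro x (⟨hx, hxc⟩ | ⟨hx, hxc⟩) (⟨hx', hxc'⟩ | ⟨hx', hxc', t, ht⟩)
    · exact hxc' hxc
    · exact hx' hx
    · exact hx hx'
    · exact hxc' t ht (hxc t ht)
  · intro t ht
    by_cases hm : Quot.mk (hrel (hN G T M) A) ⟨t, ht⟩ = c
    · exact Or.inl (Or.inl ⟨ht, hm⟩)
    · exact Or.inr (Or.inl ⟨ht, hm⟩)
  · obtain ⟨⟨t, ht⟩, rfl⟩ := Quot.exists_rep c
    exact ⟨t, Or.inl ⟨ht, rfl⟩, ht⟩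
  · obtain ⟨⟨t, ht⟩, rfl⟩ := Quot.exists_rep c'
    exact ⟨t, Or.inl ⟨ht, hcc⟩, ht⟩
  · rintro x (⟨hx, hxc⟩ | ⟨hx, hxc⟩) y (⟨hy, hyc⟩ | ⟨hy, hyc, _⟩) hxy
    · exact h.noTT x y hxy ⟨hx, hy⟩
    · exact hyc ⟨x, hx⟩ hxy.symm hxc
    · exact hyc (hxc ⟨y, hy⟩ hxy)
    · exact hind x y hx hy hxy

def zset (G : SimpleGraph V) (T : Set V) (M : SimpleGraph V) (B : V → Set V)
    (A : Set (V ⊕ Sym2 V)) (c : Quot (hrel (hN G T M) A)) : Set V :=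
  {x | (∃ hx : x ∈ T, Quot.mk (hrel (hN G T M) A) ⟨x, hx⟩ = c) ∨
    ∃ w, Sum.inl w ∈ A ∧ x ∈ B w ∧ ∃ t ∈ hN G T M (Sum.inl w), Quot.mk _ t = c}

theorem zset_into (h : Model G T k M B) (A : Set (V ⊕ Sym2 V)) (c : Quot (hrel (hN G T M) A))
    {w : V} (hw : Sum.inl w ∈ A) {t : T} (ht : t ∈ hN G T M (Sum.inl w))
    (hc : Quot.mk (hrel (hN G T M) A) t = c) {x : V} (hx : x ∈ B w) :
    Relation.ReflTransGen (StepIn G (zset G T M B A c)) t x := by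
  obtain ⟨a, ha, hat⟩ := h.adjT ht
  have hs : B w ⊆ zset G T M B A c := fun z hz => Or.inr ⟨w, hw, hz, t, ht, hc⟩
  exact Relation.ReflTransGen.head ⟨hat.symm, Or.inl ⟨t.2, hc⟩, hs ha⟩
    (rtg_mono hs (h.conn w a ha x hx))

theorem zset_conn (h : Model G T k M B) (A : Set (V ⊕ Sym2 V)) {t t' : T}
    (hr : Relation.EqvGen (hrel (hN G T M) A) t t') :
    Relation.ReflTransGen (StepIn G (zset G T M B A (Quot.mk _ t))) t t' := by
  induction hr with
  | rel x y hxy =>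
    have hq := Quot.sound hxy
    obtain ⟨i, hi, hx, hy⟩ := hxy
    cases i with
    | inl w =>
      obtain ⟨a, ha, -⟩ := h.adjT hx
      exact (zset_into h A _ hi hx rfl ha).trans (rtg_symm (zset_into h A _ hi hy hq.symm ha))
    | inr e =>
      by_cases hxy : x = y
      · rw [hxy]
      · have he : e = s(x.1, y.1) :=
          (Sym2.mem_and_mem_iff (fun h => hxy (Subtype.ext h))).1 ⟨hx.2, hy.2⟩
        have hadj : G.Adj x y := by
          have := hx.1.1
          rw [he] at this
          exact this
        exact Relation.ReflTransGen.single ⟨hadj, Or.inl ⟨x.2, rfl⟩, Or.inl ⟨y.2, hq.symm⟩⟩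
  | refl x => exact .refl
  | symm x y hxy ih =>
    rw [← Quot.eqvGen_sound hxy]
    exact rtg_symm ih
  | trans x y z hxy _ ih1 ih2 =>
    refine ih1.trans ?_
    rw [Quot.eqvGen_sound hxy]
    exact ih2

def qgr (G : SimpleGraph V) (T : Set V) (M : SimpleGraph V) (A : Set (V ⊕ Sym2 V)) :
    SimpleGraph (Quot (hrel (hN G T M) A) ⊕
      {w : V // Sum.inl w ∉ A ∧ (hN G T M (Sum.inl w)).Nonempty}) :=
  SimpleGraph.fromRel fun a b => ∃ c w, a = Sum.inl c ∧ b = Sum.inr w ∧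
    ∃ t ∈ hN G T M (Sum.inl w.1), Quot.mk _ t = c

theorem qgr_minor (h : Model G T k M B) (A : Set (V ⊕ Sym2 V)) : HasMinor G (qgr G T M A) := by
  have hTB : ∀ x ∈ T, ∀ w, w ∉ T → x ∉ B w := by
    intro x hx w hw hxw
    have hne : x ≠ w := by rintro rfl; exact hw hx
    refine Set.disjoint_left.1 (h.disj x w hne) ?_ hxw
    rw [h.hT x hx]; rfl
  have hBB : ∀ x w w', x ∈ B w → x ∈ B w' → w = w' := by
    intro x w w' h1 h2
    by_contra hne
    exact Set.disjoint_left.1 (h.disj w w' hne) h1 h2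
  have hzz : ∀ c c', c ≠ c' → Disjoint (zset G T M B A c) (zset G T M B A c') := by
    intro c c' hcc
    rw [Set.disjoint_left]
    rintro x (⟨hx, hxc⟩ | ⟨w, hw, hx, t, ht, hxc⟩) (⟨hx', hxc'⟩ | ⟨w', hw', hx', t', ht', hxc'⟩)
    · exact hcc (hxc.symm.trans hxc')
    · exact hTB x hx w' (h.notMem ht') hx'
    · exact hTB x hx' w (h.notMem ht) hx
    · obtain rfl := hBB x w w' hx hx'
      exact hcc (hxc.symm.trans ((mk_eq_of_mem hw ht ht').trans hxc'))
  have hzw : ∀ c (w : {w : V // Sum.inl w ∉ A ∧ (hN G T M (Sum.inl w)).Nonempty}),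
      Disjoint (zset G T M B A c) (B w.1) := by
    rintro c ⟨w', hw', t', ht'⟩
    rw [Set.disjoint_left]
    rintro x (⟨hx, hxc⟩ | ⟨w, hw, hx, t, ht, hxc⟩) hx'
    · exact hTB x hx w' (h.notMem ht') hx'
    · obtain rfl := hBB x w w' hx hx'
      exact hw' hw
  refine hasMinor_mk (Sum.elim (zset G T M B A) (fun w => B w.1)) ?_ ?_ ?_ ?_
  · rintro (c | ⟨w, hw, t, ht⟩)
    · obtain ⟨⟨t, ht⟩, rfl⟩ := Quot.exists_rep c
      exact ⟨t, Or.inl ⟨ht, rfl⟩⟩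
    · obtain ⟨a, ha, -⟩ := h.adjT ht
      exact ⟨a, ha⟩
  · rintro (c | ⟨w, hw, t, ht⟩)
    · obtain ⟨t, rfl⟩ := Quot.exists_rep c
      refine cs_of_root t.1 ?_
      rintro z (⟨hz, hzc⟩ | ⟨w, hw, hz, t', ht', hzc⟩)
      · exact zset_conn h A (t' := ⟨z, hz⟩) (Quot.eqvGen_exact hzc.symm)
      · exact (zset_conn h A (Quot.eqvGen_exact hzc.symm)).trans (zset_into h A _ hw ht' hzc hz)
    · exact h.conn w
  · rintro (c | w) (c' | w') hne
    · exact hzz c c' (fun h => hne (by rw [h]))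
    · exact hzw c w'
    · exact (hzw c' w).symm
    · exact h.disj _ _ (fun h => hne (by rw [Subtype.ext h]))
  · intro a b hab
    rw [qgr, SimpleGraph.fromRel_adj] at hab
    rcases hab.2 with ⟨c, w, rfl, rfl, t, ht, hc⟩ | ⟨c, w, rfl, rfl, t, ht, hc⟩
    · obtain ⟨x, hx, hxt⟩ := h.adjT ht
      exact ⟨t, Or.inl ⟨t.2, hc⟩, x, hx, hxt.symm⟩
    · obtain ⟨x, hx, hxt⟩ := h.adjT ht
      exact ⟨x, hx, t, Or.inl ⟨t.2, hc⟩, hxt⟩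

theorem counting (h : Model G T k M B) (hind : ∀ p q, p ∉ T → q ∉ T → ¬ M.Adj p q)
    (hK5 : ¬ HasMinor G (completeGraph (Fin 5))) (ℓ : ℕ) (hk : 5 * ℓ + 1 ≤ k)
    (A : Set (V ⊕ Sym2 V))
    (hA : Aᶜ.ncard + ℓ < ℓ * Nat.card (Quot (hrel (hN G T M) A))) : False := by
  classical
  have := Fintype.ofFinite (Quot (hrel (hN G T M) A))
  have hcard : 1 < Nat.card (Quot (hrel (hN G T M) A)) := by
    by_contra hcon
    push Not at hcon
    have := Nat.mul_le_mul_left ℓ hcon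
    omega
  have hother : ∀ c : Quot (hrel (hN G T M) A), ∃ c', c' ≠ c := by
    intro c
    rw [Nat.card_eq_fintype_card, Fintype.one_lt_card_iff_nontrivial] at hcard
    exact exists_ne c
  have h1 : ∑ c : Quot (hrel (hN G T M) A), k ≤
      ∑ c : Quot (hrel (hN G T M) A), ({w | Sum.inl w ∉ A ∧ ∃ t ∈ hN G T M (Sum.inl w), Quot.mk _ t = c}.ncard +
      {e | Sum.inr e ∉ A ∧ ∃ t ∈ hN G T M (Sum.inr e), Quot.mk _ t = c}.ncard) := by
    refine Finset.sum_le_sum fun c _ => ?_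
    obtain ⟨c', hc'⟩ := hother c
    exact part_cut h hind A c c' hc'
  rw [Finset.sum_add_distrib, Finset.sum_const, Finset.card_univ, smul_eq_mul,
    ← Nat.card_eq_fintype_card] at h1
  set p := Nat.card (Quot (hrel (hN G T M) A)) with hp
  have h2 : ∑ c : Quot (hrel (hN G T M) A),
      {w | Sum.inl w ∉ A ∧ ∃ t ∈ hN G T M (Sum.inl w), Quot.mk _ t = c}.ncard ≤
      (qgr G T M A).edgeSet.ncard := by
    rw [sum_ncard]
    let f : Quot (hrel (hN G T M) A) × V → Sym2 (Quot (hrel (hN G T M) A) ⊕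
      {w : V // Sum.inl w ∉ A ∧ (hN G T M (Sum.inl w)).Nonempty}) := fun x =>
      if hx : Sum.inl x.2 ∉ A ∧ (hN G T M (Sum.inl x.2)).Nonempty then
        s(Sum.inl x.1, Sum.inr ⟨x.2, hx⟩) else s(Sum.inl x.1, Sum.inl x.1)
    have hf : ∀ x : Quot (hrel (hN G T M) A) × V,
        ∀ hx : Sum.inl x.2 ∉ A ∧ (hN G T M (Sum.inl x.2)).Nonempty,
        f x = s(Sum.inl x.1, Sum.inr ⟨x.2, hx⟩) := fun x hx => dif_pos hx
    refine Set.ncard_le_ncard_of_injOn f ?_ ?_ (Set.toFinite _)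
    · rintro ⟨c, w⟩ ⟨hw, t, ht, hc⟩
      rw [hf ⟨c, w⟩ ⟨hw, t, ht⟩, SimpleGraph.mem_edgeSet, qgr, SimpleGraph.fromRel_adj]
      exact ⟨by simp, Or.inl ⟨c, ⟨w, hw, t, ht⟩, rfl, rfl, t, ht, hc⟩⟩
    · rintro ⟨c, w⟩ ⟨hw, t, ht, hc⟩ ⟨c', w'⟩ ⟨hw', t', ht', hc'⟩ hff
      rw [hf ⟨c, w⟩ ⟨hw, t, ht⟩, hf ⟨c', w'⟩ ⟨hw', t', ht'⟩] at hff
      simpa using hff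
  have h3 : ∑ c : Quot (hrel (hN G T M) A),
      {e | Sum.inr e ∉ A ∧ ∃ t ∈ hN G T M (Sum.inr e), Quot.mk _ t = c}.ncard ≤
      2 * {e : Sym2 V | Sum.inr e ∉ A}.ncard := by
    rw [sum_ncard, ncard_swap (fun c e => Sum.inr e ∉ A ∧ ∃ t ∈ hN G T M (Sum.inr e),
      Quot.mk (hrel (hN G T M) A) t = c), ← sum_ncard (fun e c => Sum.inr e ∉ A ∧
      ∃ t ∈ hN G T M (Sum.inr e), Quot.mk (hrel (hN G T M) A) t = c)]
    have h4 : ∀ e : Sym2 V, {c | Sum.inr e ∉ A ∧ ∃ t ∈ hN G T M (Sum.inr e),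
        Quot.mk (hrel (hN G T M) A) t = c}.ncard ≤ if Sum.inr e ∉ A then 2 else 0 := by
      intro e
      by_cases he : Sum.inr e ∉ A
      · rw [if_pos he]
        by_cases hX : e ∈ TTE G T
        · induction e with
          | _ x y =>
          have hx : x ∈ T := hX.2 x (Sym2.mem_mk_left _ _)
          have hy : y ∈ T := hX.2 y (Sym2.mem_mk_right _ _)
          refine (Set.ncard_le_ncard (t := {Quot.mk (hrel (hN G T M) A) ⟨x, hx⟩,
            Quot.mk (hrel (hN G T M) A) ⟨y, hy⟩}) ?_ (Set.toFinite _)).trans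
            ((Set.ncard_insert_le _ _).trans (by rw [Set.ncard_singleton]))
          rintro c ⟨-, ⟨t, htT⟩, ht, rfl⟩
          rcases Sym2.mem_iff.1 ht.2 with h | h
          · left; congr
          · right; rw [Set.mem_singleton_iff]; congr
        · rw [show {c | Sum.inr e ∉ A ∧ ∃ t ∈ hN G T M (Sum.inr e),
            Quot.mk (hrel (hN G T M) A) t = c} = ∅ from ?_]
          · simp
          · ext c
            simp only [Set.mem_ofPred_eq, Set.mem_empty_iff_false, iff_false]
            rintro ⟨-, t, ht, -⟩
            exact hX ht.1
      · rw [if_neg he, show {c | Sum.inr e ∉ A ∧ ∃ t ∈ hN G T M (Sum.inr e),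
            Quot.mk (hrel (hN G T M) A) t = c} = ∅ from ?_]
        · simp
        · ext c
          simp only [Set.mem_ofPred_eq, Set.mem_empty_iff_false, iff_false]
          rintro ⟨h', -⟩
          exact absurd h' he
    refine (Finset.sum_le_sum fun e _ => h4 e).trans ?_
    rw [← Finset.sum_filter, Finset.sum_const, smul_eq_mul, Set.ncard_eq_toFinset_card',
      Set.toFinset_ofPred, mul_comm]
  have h4 : {w : V | Sum.inl w ∉ A}.ncard + {e : Sym2 V | Sum.inr e ∉ A}.ncard ≤ Aᶜ.ncard := by
    rw [← Set.ncard_image_of_injective _ (Sum.inl_injective (α := V) (β := Sym2 V)),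
      ← Set.ncard_image_of_injective {e : Sym2 V | Sum.inr e ∉ A}
        (Sum.inr_injective (α := V) (β := Sym2 V)), ← Set.ncard_union_eq]
    · refine Set.ncard_le_ncard ?_ (Set.toFinite _)
      rintro _ (⟨w, hw, rfl⟩ | ⟨w, hw, rfl⟩)
      · exact hw
      · exact hw
    · rw [Set.disjoint_left]
      rintro _ ⟨w, hw, rfl⟩ ⟨w', hw', h'⟩
      cases h'
  have h5 : Fintype.card {w : V // Sum.inl w ∉ A ∧ (hN G T M (Sum.inl w)).Nonempty} ≤
      {w : V | Sum.inl w ∉ A}.ncard := by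
    rw [← Nat.card_eq_fintype_card, ← Set.coe_ofPred, Nat.card_coe_set_eq]
    exact Set.ncard_le_ncard (fun w hw => hw.1) (Set.toFinite _)
  have h6 := mader_k5 _ _ (qgr G T M A) rfl
    (fun hm => hK5 (hasMinor_trans (qgr_minor h A) hm))
  have hp' : Fintype.card (Quot (hrel (hN G T M) A)) = p := by
    rw [hp, Nat.card_eq_fintype_card]
  rw [Fintype.card_sum, hp'] at h6
  have h7 : (5 * ℓ + 1) * p ≤ p * k := by
    rw [mul_comm]; exact Nat.mul_le_mul_left p hk
  have h8 : 1 ≤ ℓ := by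
    rcases Nat.eq_zero_or_pos ℓ with h0 | h0
    · rw [h0] at hA; omega
    · exact h0
  have h9 : 1 * p ≤ ℓ * p := Nat.mul_le_mul_right p h8
  linarith

end Counting

/-! ### Assembly -/

section Assembly

theorem exists_path_graph {V : Type*} [Finite V] (H : SimpleGraph V) {a b : V}
    (h : H.Reachable a b) :
    ∃ P : SimpleGraph V, P ≤ H ∧ P.Reachable a b ∧
      ∀ x, x ≠ a → x ≠ b → (P.neighborSet x).ncard ≤ 2 := by
  obtain ⟨p, hp⟩ := h.exists_isPath
  refine ⟨p.toSubgraph.spanningCoe, p.toSubgraph.spanningCoe_le, ?_, ?_⟩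
  · refine ⟨p.transfer _ ?_⟩
    intro e he
    induction e with
    | _ x y => exact (Walk.mem_edges_toSubgraph p).2 he
  · intro x hxa hxb
    by_cases hx : x ∈ p.support
    · obtain ⟨i, rfl, hi⟩ := Walk.mem_support_iff_exists_getVert.1 hx
      have h0 : i ≠ 0 := by rintro rfl; simp at hxa
      have h1 : i ≠ p.length := by rintro rfl; simp at hxb
      exact (hp.ncard_neighborSet_toSubgraph_internal_eq_two h0 (by omega)).le
    · have : p.toSubgraph.spanningCoe.neighborSet x = ∅ := by
        ext y
        simp only [mem_neighborSet, Set.mem_empty_iff_false, iff_false]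
        intro hxy
        exact hx ((Walk.mem_verts_toSubgraph p).1 (p.toSubgraph.edge_vert hxy))
      rw [this]; simp

/-- edge-minimal subgraph keeping the terminals connected -/
theorem exists_steiner {V : Type*} [Finite V] (H : SimpleGraph V) (T : Set V)
    (hT : ∀ x ∈ T, ∀ y ∈ T, H.Reachable x y) :
    ∃ F ≤ H, F.IsAcyclic ∧ (∀ x ∈ F.support ∪ T, ∀ y ∈ F.support ∪ T, F.Reachable x y) ∧
      ∀ x ∈ F.support, x ∉ T → 2 ≤ (F.neighborSet x).ncard := by
  classical
  have h0 : ∃ n, ∃ F ≤ H, (∀ x ∈ T, ∀ y ∈ T, F.Reachable x y) ∧ F.edgeSet.ncard = n :=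
    ⟨_, H, le_rfl, hT, rfl⟩
  obtain ⟨F, hFH, hFT, hn⟩ := Nat.find_spec h0
  have hmin : ∀ x y, F.Adj x y →
      ¬ (∀ s ∈ T, ∀ t ∈ T, (F.deleteEdges {s(x, y)}).Reachable s t) := by
    intro x y hxy hcon
    have h1 := Nat.find_min' h0 ⟨_, (F.deleteEdges_le _).trans hFH, hcon, rfl⟩
    have h2 : (F.deleteEdges {s(x, y)}).edgeSet.ncard < F.edgeSet.ncard := by
      rw [edgeSet_deleteEdges]
      exact Set.ncard_sdiff_singleton_lt_of_mem hxy (Set.toFinite _)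
    omega
  have hdel : ∀ x y u v, F.Adj u v → s(u, v) ≠ s(x, y) →
      (F.deleteEdges {s(x, y)}).Adj u v := by
    intro x y u v huv hne
    rw [SimpleGraph.deleteEdges_adj]
    exact ⟨huv, hne⟩
  have hsupp : ∀ x ∈ F.support, ∃ t ∈ T, F.Reachable t x := by
    rintro x ⟨y, hxy⟩
    by_contra hcon
    push Not at hcon
    apply hmin x y hxy
    intro s hs t ht
    have h1 := hFT s hs t ht
    rw [reachable_iff_reflTransGen] at h1
    clear ht
    induction h1 with
    | refl => exact Reachable.refl _
    | @tail u v hu huv ih =>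
      have hu2 : F.Reachable s u := (reachable_iff_reflTransGen _ _).2 hu
      refine ih.trans (hdel x y u v huv ?_).reachable
      intro he
      rcases Sym2.eq_iff.1 he with h | h
      · exact hcon s hs (h.1 ▸ hu2)
      · exact hcon s hs (h.2 ▸ hu2.trans huv.reachable)
  refine ⟨F, hFH, ?_, ?_, ?_⟩
  · rw [isAcyclic_iff_forall_adj_isBridge]
    intro x y hxy hcon
    apply hmin x y hxy
    intro s hs t ht
    have h1 := hFT s hs t ht
    rw [reachable_iff_reflTransGen] at h1
    clear ht
    induction h1 with
    | refl => exact Reachable.refl _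
    | @tail u v hu huv ih =>
      refine ih.trans ?_
      by_cases he : s(u, v) = s(x, y)
      · rcases Sym2.eq_iff.1 he with ⟨rfl, rfl⟩ | ⟨rfl, rfl⟩
        · exact hcon
        · exact hcon.symm
      · exact (hdel x y u v huv he).reachable
  · have key : ∀ x ∈ F.support ∪ T, ∃ t ∈ T, F.Reachable t x := by
      rintro x (hx | hx)
      · exact hsupp x hx
      · exact ⟨x, hx, Reachable.refl _⟩
    intro x hx y hy
    obtain ⟨s, hs, hsx⟩ := key x hx
    obtain ⟨t, ht, hty⟩ := key y hy
    exact hsx.symm.trans ((hFT s hs t ht).trans hty)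
  · rintro x ⟨y, hxy⟩ hxT
    by_contra hcon
    have hnb : ∀ z, F.Adj x z → z = y := by
      intro z hz
      have h1 : (F.neighborSet x).ncard ≤ 1 := by omega
      exact (Set.ncard_le_one (Set.toFinite _)).1 h1 z hz y hxy
    apply hmin x y hxy
    intro s hs t ht
    have h1 := hFT s hs t ht
    rw [reachable_iff_reflTransGen] at h1
    have h2 : ∀ z, Relation.ReflTransGen F.Adj s z →
        (F.deleteEdges {s(x, y)}).Reachable s (if z = x then y else z) := by
      intro z hz
      induction hz with
      | refl =>
        rw [if_neg (show s ≠ x from fun h => hxT (h ▸ hs))]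
      | @tail u v hu huv ih =>
        by_cases hu : u = x
        · subst hu
          rw [if_pos rfl] at ih
          have hv := hnb v huv
          rw [if_neg huv.ne.symm, hv]
          exact ih
        · rw [if_neg hu] at ih
          by_cases hv : v = x
          · subst hv
            rw [if_pos rfl]
            have hu' : u = y := hnb u huv.symm
            rw [hu'] at ih
            exact ih
          · rw [if_neg hv]
            refine ih.trans (hdel x y u v huv ?_).reachable
            intro he
            rcases Sym2.eq_iff.1 he with h | h
            · exact hu h.1
            · exact hv h.2
    have h3 := h2 t h1
    rwa [if_neg (show t ≠ x from fun h => hxT (h ▸ ht))] at h3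

variable {V : Type u} [Fintype V] {G : SimpleGraph V} {T : Set V} {k : ℕ} {M : SimpleGraph V}
  {B : V → Set V}

def reg (B : V → Set V) : V ⊕ Sym2 V → Set V
  | Sum.inl w => B w
  | Sum.inr _ => ∅

structure Good (G : SimpleGraph V) (T : Set V) (B : V → Set V) (i : V ⊕ Sym2 V)
    (P : SimpleGraph V) : Prop where
  le : P ≤ G
  supp : ∀ x y, P.Adj x y → x ∉ T → x ∈ reg B i
  tt : ∀ x y, P.Adj x y → x ∈ T → y ∈ T → i = Sum.inr s(x, y)
  deg : ∀ x, x ∉ T → (P.neighborSet x).ncard ≤ 2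

theorem good_bot (i : V ⊕ Sym2 V) : Good G T B i ⊥ := by
  refine ⟨bot_le, fun x y h => h.elim, fun x y h => h.elim, fun x _ => ?_⟩
  have : (⊥ : SimpleGraph V).neighborSet x = ∅ := by ext y; simp
  rw [this]; simp

theorem exists_good (h : Model G T k M B) (i : V ⊕ Sym2 V) (a b : T) (ha : a ∈ hN G T M i)
    (hb : b ∈ hN G T M i) : ∃ P, Good G T B i P ∧ P.Reachable a b := by
  by_cases hab : a = b
  · subst hab
    exact ⟨⊥, good_bot i, Reachable.refl _⟩
  have hab' : (a : V) ≠ b := fun h => hab (Subtype.ext h)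
  cases i with
  | inl w =>
    let H : SimpleGraph V :=
      { Adj := fun x y => G.Adj x y ∧ (x ∉ T → x ∈ B w) ∧ (y ∉ T → y ∈ B w) ∧ ¬ (x ∈ T ∧ y ∈ T)
        symm := ⟨fun x y h => ⟨h.1.symm, h.2.2.1, h.2.1, fun h' => h.2.2.2 ⟨h'.2, h'.1⟩⟩⟩
        loopless := ⟨fun x h => G.loopless.irrefl x h.1⟩ }
    have hBT : ∀ x ∈ B w, x ∉ T := by
      intro x hx hxT
      have hne : x ≠ w := by rintro rfl; exact h.notMem ha hxT
      refine Set.disjoint_left.1 (h.disj x w hne) ?_ hx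
      rw [h.hT x hxT]; rfl
    obtain ⟨x, hx, hxa⟩ := h.adjT ha
    obtain ⟨y, hy, hyb⟩ := h.adjT hb
    have h1 : H.Reachable x y := by
      rw [reachable_iff_reflTransGen]
      refine Relation.ReflTransGen.mono ?_ _ _ (h.conn w x hx y hy)
      intro u v huv
      exact ⟨huv.1, fun _ => huv.2.1, fun _ => huv.2.2, fun h' => hBT u huv.2.1 h'.1⟩
    have h2 : H.Adj x a := ⟨hxa, fun _ => hx, fun h' => absurd a.2 h', fun h' => hBT x hx h'.1⟩
    have h3 : H.Adj y b := ⟨hyb, fun _ => hy, fun h' => absurd b.2 h', fun h' => hBT y hy h'.1⟩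
    obtain ⟨P, hPH, hP, hdeg⟩ := exists_path_graph H
      (h2.symm.reachable.trans (h1.trans h3.reachable))
    refine ⟨P, ⟨fun u v huv => (hPH huv).1, fun u v huv hu => (hPH huv).2.1 hu, ?_, ?_⟩, hP⟩
    · intro u v huv hu hv
      exact absurd ⟨hu, hv⟩ (hPH huv).2.2.2
    · intro u hu
      refine hdeg u ?_ ?_
      · rintro rfl; exact hu a.2
      · rintro rfl; exact hu b.2
  | inr e =>
    have he : e = s(a.1, b.1) := (Sym2.mem_and_mem_iff hab').1 ⟨ha.2, hb.2⟩
    have hadj : G.Adj a b := by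
      have := ha.1.1
      rw [he] at this
      exact this
    have hP : ∀ x y, (fromEdgeSet {s(a.1, b.1)}).Adj x y → s(x, y) = s(a.1, b.1) := by
      intro x y hxy
      rw [fromEdgeSet_adj] at hxy
      exact hxy.1
    have hPT : ∀ x y, (fromEdgeSet {s(a.1, b.1)}).Adj x y → x ∈ T := by
      intro x y hxy
      rcases Sym2.eq_iff.1 (hP x y hxy) with ⟨rfl, rfl⟩ | ⟨rfl, rfl⟩
      · exact a.2
      · exact b.2
    refine ⟨fromEdgeSet {s(a.1, b.1)}, ⟨?_, ?_, ?_, ?_⟩, ?_⟩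
    · intro x y hxy
      have : s(x, y) ∈ G.edgeSet := by rw [hP x y hxy]; exact hadj
      exact this
    · intro x y hxy hx
      exact absurd (hPT x y hxy) hx
    · intro x y hxy _ _
      rw [he, hP x y hxy]
    · intro x hx
      have : (fromEdgeSet {s(a.1, b.1)}).neighborSet x = ∅ := by
        ext y
        simp only [mem_neighborSet, Set.mem_empty_iff_false, iff_false]
        exact fun hxy => hx (hPT x y hxy)
      rw [this]; simp
    · refine Adj.reachable ?_
      rw [fromEdgeSet_adj]
      exact ⟨rfl, hab'⟩

theorem reg_eq (h : Model G T k M B) {x : V} {i i' : V ⊕ Sym2 V} (hx : x ∈ reg B i)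
    (hx' : x ∈ reg B i') : i = i' := by
  cases i with
  | inr e => exact hx.elim
  | inl w =>
    cases i' with
    | inr e => exact hx'.elim
    | inl w' =>
      by_contra hne
      exact Set.disjoint_left.1 (h.disj w w' (fun h => hne (by rw [h]))) hx hx'

theorem good_eq (h : Model G T k M B) {i i' : V ⊕ Sym2 V} {P P' : SimpleGraph V}
    (hP : Good G T B i P) (hP' : Good G T B i' P') {x y : V} (hxy : P.Adj x y)
    (hxy' : P'.Adj x y) : i = i' := by
  by_cases hx : x ∈ T
  · by_cases hy : y ∈ T
    · exact (hP.tt x y hxy hx hy).trans (hP'.tt x y hxy' hx hy).symm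
    · exact reg_eq h (hP.supp y x hxy.symm hy) (hP'.supp y x hxy'.symm hy)
  · exact reg_eq h (hP.supp x y hxy hx) (hP'.supp x y hxy' hx)

theorem assemble (h : Model G T k M B) {ℓ : ℕ} (col : V ⊕ Sym2 V → Option (Fin ℓ))
    (a b : V ⊕ Sym2 V → T)
    (hab : ∀ i j, col i = some j → a i ∈ hN G T M i ∧ b i ∈ hN G T M i)
    (hc : ∀ j x y, Relation.ReflTransGen (cstep col a b j) x y) :
    ∃ F : Fin ℓ → SimpleGraph V,
      (∀ j, IsSteinerTree G T (F j)) ∧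
      (∀ i j, i ≠ j → EDisj T (F i) (F j)) ∧
      (∀ j, ∀ x ∈ (F j).support, x ∉ T → ((F j).neighborSet x).ncard = 2) := by
  classical
  have hP : ∀ i, ∃ P, Good G T B i P ∧ ∀ j, col i = some j → P.Reachable (a i : V) (b i) := by
    intro i
    cases hi : col i with
    | none => exact ⟨⊥, good_bot i, fun j h => by cases h⟩
    | some j =>
      obtain ⟨P, h1, h2⟩ := exists_good h i (a i) (b i) (hab i j hi).1 (hab i j hi).2
      exact ⟨P, h1, fun _ _ => h2⟩
  choose P hPg hPr using hP
  let H : Fin ℓ → SimpleGraph V := fun j =>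
    { Adj := fun x y => ∃ i, col i = some j ∧ (P i).Adj x y
      symm := ⟨fun x y ⟨i, hi, hxy⟩ => ⟨i, hi, hxy.symm⟩⟩
      loopless := ⟨fun x ⟨i, _, hx⟩ => (P i).loopless.irrefl x hx⟩ }
  have hHT : ∀ j, ∀ x ∈ T, ∀ y ∈ T, (H j).Reachable x y := by
    intro j x hx y hy
    have h1 := hc j ⟨x, hx⟩ ⟨y, hy⟩
    have h2 : ∀ z : T, Relation.ReflTransGen (cstep col a b j) ⟨x, hx⟩ z →
        (H j).Reachable x z := by
      intro z hz
      induction hz with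
      | refl => exact Reachable.refl _
      | @tail u v _ huv ih =>
        refine ih.trans ?_
        obtain ⟨i, hi, huv⟩ := huv
        have hr : (H j).Reachable (a i : V) (b i) :=
          (hPr i j hi).mono (fun x y hxy => ⟨i, hi, hxy⟩)
        rcases huv with ⟨rfl, rfl⟩ | ⟨rfl, rfl⟩
        · exact hr
        · exact hr.symm
    exact h2 _ h1
  choose F hFH hFa hFc hFd using fun j => exists_steiner (H j) T (hHT j)
  refine ⟨F, ?_, ?_, ?_⟩
  · intro j
    refine ⟨?_, hFa j, hFc j⟩
    intro x y hxy
    obtain ⟨i, _, hi⟩ := hFH j hxy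
    exact (hPg i).le hi
  · intro j j' hne
    have hcol : ∀ i i', col i = some j → col i' = some j' → i ≠ i' := by
      rintro i i' hi hi' rfl
      rw [hi] at hi'
      exact hne (Option.some.inj hi')
    constructor
    · rw [Set.disjoint_left]
      intro e he he'
      induction e with
      | _ x y =>
      obtain ⟨i, hi, hxy⟩ := hFH j he
      obtain ⟨i', hi', hxy'⟩ := hFH j' he'
      exact hcol i i' hi hi' (good_eq h (hPg i) (hPg i') hxy hxy')
    · rintro x ⟨y, hy⟩ ⟨y', hy'⟩
      by_contra hx
      obtain ⟨i, hi, hxy⟩ := hFH j hy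
      obtain ⟨i', hi', hxy'⟩ := hFH j' hy'
      exact hcol i i' hi hi' (reg_eq h ((hPg i).supp x y hxy hx) ((hPg i').supp x y' hxy' hx))
  · intro j x hx hxT
    refine le_antisymm ?_ (hFd j x hx hxT)
    obtain ⟨y, hy⟩ := hx
    obtain ⟨i, hi, hxy⟩ := hFH j hy
    refine le_trans (Set.ncard_le_ncard ?_ (Set.toFinite _)) ((hPg i).deg x hxT)
    intro z hz
    obtain ⟨i', hi', hxz⟩ := hFH j hz
    rw [reg_eq h ((hPg i).supp x y hxy hxT) ((hPg i').supp x z hxz hxT)]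
    exact hxz

end Assembly

/-- **Packing Steiner trees in planar graphs.** If every pair of terminals of a planar
graph `G` is `k`-element-connected, then `G` contains at least `⌈k/5⌉ - 1` pairwise
element-disjoint Steiner trees, in each of which every non-terminal vertex has
degree exactly 2. -/
theorem planar_steiner_tree_packing {V : Type*} [Fintype V]
    (G : SimpleGraph V) (T : Set V) (hplanar : IsPlanar G) (k : ℕ)
    (hconn : ∀ u ∈ T, ∀ v ∈ T, u ≠ v → k ≤ elemConn G T u v) :
    ∃ F : Fin ((k + 4) / 5 - 1) → SimpleGraph V,
      (∀ j, IsSteinerTree G T (F j)) ∧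
      (∀ i j, i ≠ j → EDisj T (F i) (F j)) ∧
      (∀ j, ∀ x ∈ (F j).support, x ∉ T → ((F j).neighborSet x).ncard = 2) := by
  classical
  rcases Set.eq_empty_or_nonempty T with rfl | ⟨t0, ht0⟩
  · refine ⟨fun _ => ⊥, fun j => ⟨bot_le, isAcyclic_bot, ?_⟩, fun i j _ => ⟨?_, ?_⟩, ?_⟩
    · rintro x (⟨y, hy⟩ | hx)
      · exact hy.elim
      · exact hx.elim
    · simp
    · rintro x ⟨y, hy⟩
      exact hy.elim
    · rintro j x ⟨y, hy⟩
      exact hy.elim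
  rcases Nat.eq_zero_or_pos ((k + 4) / 5 - 1) with hℓ | hℓ
  · have hem : IsEmpty (Fin ((k + 4) / 5 - 1)) := by rw [hℓ]; infer_instance
    exact ⟨fun _ => ⊥, fun j => hem.elim j, fun j => hem.elim j, fun j => hem.elim j⟩
  obtain ⟨M, B, hM, hind⟩ := exists_model hconn
  have : Nonempty T := ⟨⟨t0, ht0⟩⟩
  rcases packing (hN G T M) ((k + 4) / 5 - 1) with ⟨col, a, b, hab, hc⟩ | ⟨A, hA⟩
  · exact assemble hM col a b hab hc
  · exact (counting hM hind hplanar.1 _ (by omega) A hA).elim
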